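/- arXiv:2412.02848 — 5 statements merged into one kernel-verified Lean document; each statement's English description precedes it below -/
import Mathlib

section
/- Let (Z,d,ν) be a complete metric measure space with ν a doubling measure, let 0<θ<1 and 1<p<∞, and let E ⊂ Z be a closed set such that Z∖E is bounded and nonempty. If Z∖E satisfies a (θ,p)-fractional Hardy inequality in (Z,d,ν), then there exists a compact set Z₀ ⊂ Z such that Z∖E = Z₀∖E, the restricted measure ν|_{Z₀} is doubling on the metric space (Z₀, d|_{Z₀×Z₀}), and the open subset Z₀∖E of Z₀ satisfies a (θ,p)-fractional Hardy inequality in the metric measure space (Z₀, d|_{Z₀×Z₀}, ν|_{Z₀}) (with all distances, balls and integrals taken in Z₀). -/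
open MeasureTheory Metric Set ENNReal

/-- `ν` is a doubling measure with doubling constant `Cν`:
`0 < ν(B(x,2r)) ≤ Cν · ν(B(x,r)) < ∞` for all `x` and `r > 0`. -/
def IsDoublingWith {Z : Type*} [PseudoMetricSpace Z] [MeasurableSpace Z]
    (ν : Measure Z) (Cν : ℝ) : Prop :=
  ∀ (x : Z) (r : ℝ), 0 < r →
    0 < ν (ball x (2 * r)) ∧
    ν (ball x (2 * r)) ≤ ENNReal.ofReal Cν * ν (ball x r) ∧
    ν (ball x r) < ⊤

/-- The open set `Ω` satisfies the `(θ,p)`-fractional Hardy inequality with constant `C`: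
for all Lipschitz `u : Z → ℝ` with compact support contained in `Ω`,
`∫_Ω |u(x)|^p / d(x,Ωᶜ)^{θp} dν ≤ C ∫_Z ∫_Z |u(x)-u(y)|^p / (d(x,y)^{θp} ν(B(x,d(x,y)))) dν dν`. -/
def FracHardy {Z : Type*} [MetricSpace Z] [MeasurableSpace Z]
    (ν : Measure Z) (Ω : Set Z) (θ p C : ℝ) : Prop :=
  ∀ u : Z → ℝ, (∃ K : NNReal, LipschitzWith K u) → HasCompactSupport u → tsupport u ⊆ Ω →
    ∫⁻ x in Ω, ENNReal.ofReal (|u x| ^ p) / ENNReal.ofReal (infDist x Ωᶜ ^ (θ * p)) ∂ν ≤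
      ENNReal.ofReal C *
        ∫⁻ x, ∫⁻ y, ENNReal.ofReal (|u x - u y| ^ p) /
          (ENNReal.ofReal (dist x y ^ (θ * p)) * ν (ball x (dist x y))) ∂ν ∂ν


section helpers
set_option linter.unusedSectionVars false
variable {Z : Type*} [MetricSpace Z] [MeasurableSpace Z]

lemma fhl_iter {ν : Measure Z} {Cν : ℝ} (h : IsDoublingWith ν Cν) (x : Z) (r : ℝ) (hr : 0 < r)
    (n : ℕ) : ν (ball x (2 ^ n * r)) ≤ ENNReal.ofReal Cν ^ n * ν (ball x r) := by
  induction n with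
  | zero => simp
  | succ n ih =>
    have h1 := (h x (2 ^ n * r) (by positivity)).2.1
    rw [pow_succ', mul_assoc]
    refine h1.trans ?_
    rw [pow_succ', mul_assoc]
    gcongr

lemma fhl_pos {ν : Measure Z} {Cν : ℝ} (h : IsDoublingWith ν Cν) (x : Z) (r : ℝ) (hr : 0 < r) :
    0 < ν (ball x r) := by
  have := (h x (r / 2) (by positivity)).1
  rwa [mul_div_cancel₀ _ (two_ne_zero)] at this

lemma fhl_lt_top {ν : Measure Z} {Cν : ℝ} (h : IsDoublingWith ν Cν) (x : Z) (r : ℝ) :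
    ν (ball x r) < ⊤ := by
  rcases le_or_gt r 0 with h0 | h0
  · simp [ball_eq_empty.2 h0]
  · exact (h x r h0).2.2

lemma fhl_proper [BorelSpace Z] [CompleteSpace Z] {ν : Measure Z} {Cν : ℝ}
    (h : IsDoublingWith ν Cν) : ProperSpace Z := by
  refine ⟨fun x₀ R => ?_⟩
  refine isCompact_iff_totallyBounded_isComplete.2 ⟨?_, isClosed_closedBall.isComplete⟩
  rw [Metric.totallyBounded_iff]
  intro ε hε
  by_contra hcon
  push Not at hcon
  obtain ⟨f, hf1, hf2⟩ := exists_seq_of_forall_finset_exists (fun x => x ∈ closedBall x₀ R)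
    (fun x y => ε ≤ dist y x) (by
      intro s _
      have := hcon (s : Set Z) s.finite_toSet
      rw [Set.not_subset] at this
      obtain ⟨y, hy, hy2⟩ := this
      refine ⟨y, hy, fun x hx => ?_⟩
      simp only [Set.mem_iUnion, not_exists] at hy2
      have := hy2 x (by simpa using hx)
      simpa using this)
  obtain ⟨N, hN⟩ : ∃ N : ℕ, (R + 1) / (ε / 2) < 2 ^ N := pow_unbounded_of_one_lt _ one_lt_two
  have hN' : R + 1 ≤ 2 ^ N * (ε / 2) := by
    rw [div_lt_iff₀ (by positivity)] at hN
    exact hN.le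
  have hdisj : Pairwise (Function.onFun Disjoint fun n => ball (f n) (ε / 2)) := by
    have key : ∀ m n, m < n → Disjoint (ball (f m) (ε / 2)) (ball (f n) (ε / 2)) := by
      intro m n hmn
      refine ball_disjoint_ball ?_
      have := hf2 m n hmn
      rw [dist_comm] at this
      linarith
    intro m n hmn
    rcases lt_or_gt_of_ne hmn with h1 | h1
    · exact key m n h1
    · exact (key n m h1).symm
  have hsub : (⋃ n, ball (f n) (ε / 2)) ⊆ ball x₀ (R + ε) := by
    refine Set.iUnion_subset fun n y hy => ?_
    have h1 := hf1 n
    simp only [mem_closedBall, mem_ball] at h1 hy ⊢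
    linarith [dist_triangle y (f n) x₀]
  have hlow : ∀ n, ν (ball x₀ 1) ≤ ENNReal.ofReal Cν ^ N * ν (ball (f n) (ε / 2)) := by
    intro n
    refine le_trans (measure_mono ?_) (fhl_iter h (f n) (ε / 2) (by positivity) N)
    intro y hy
    have h1 := hf1 n
    simp only [mem_closedBall, mem_ball] at h1 hy ⊢
    have := dist_triangle y x₀ (f n)
    rw [dist_comm x₀] at this
    linarith
  have hfin := (measure_mono hsub).trans_lt (fhl_lt_top h x₀ (R + ε))
  rw [measure_iUnion hdisj (fun n => measurableSet_ball)] at hfin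
  have h2 : ∑' n : ℕ, ν (ball x₀ 1) ≤ ENNReal.ofReal Cν ^ N * ∑' n, ν (ball (f n) (ε / 2)) := by
    rw [← ENNReal.tsum_mul_left]
    exact ENNReal.tsum_le_tsum hlow
  rw [ENNReal.tsum_const_eq_top_of_ne_zero (fhl_pos h x₀ 1 one_pos).ne'] at h2
  exact absurd h2 (not_le.2 (ENNReal.mul_lt_top (by simp) hfin))

/-- Iterated neighbourhoods of a ball. -/
def fhlA (x₀ : Z) (R : ℝ) : ℕ → Set Z
  | 0 => ball x₀ R
  | n + 1 => thickening (R / 2 ^ (n + 1)) (fhlA x₀ R n)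

lemma fhlA_mono (x₀ : Z) {R : ℝ} (hR : 0 < R) : Monotone (fhlA x₀ R) :=
  monotone_nat_of_le_succ fun n => self_subset_thickening (by positivity) _

lemma fhlA_sub (x₀ : Z) {R : ℝ} (n : ℕ) :
    fhlA x₀ R n ⊆ ball x₀ (2 * R - R / 2 ^ n) := by
  induction n with
  | zero => simp [fhlA]; apply ball_subset_ball; linarith
  | succ n ih =>
    intro x hx
    obtain ⟨z, hz, hxz⟩ := mem_thickening_iff.1 hx
    have h1 := ih hz
    simp only [mem_ball] at h1 ⊢
    have : R / 2 ^ n = 2 * (R / 2 ^ (n + 1)) := by rw [pow_succ]; field_simp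
    linarith [dist_triangle x z x₀]

lemma fhlA_chain (x₀ : Z) {R : ℝ} (k j : ℕ) : ∀ x ∈ fhlA x₀ R (k + j),
    ∃ z ∈ fhlA x₀ R k, dist x z ≤ R / 2 ^ k - R / 2 ^ (k + j) := by
  induction j with
  | zero => intro x hx; exact ⟨x, hx, by simp⟩
  | succ j ih =>
    intro x hx
    rw [← add_assoc] at hx
    obtain ⟨y, hy, hxy⟩ := mem_thickening_iff.1 hx
    obtain ⟨z, hz, hyz⟩ := ih y hy
    refine ⟨z, hz, ?_⟩
    have : R / 2 ^ (k + j) = 2 * (R / 2 ^ (k + j + 1)) := by rw [pow_succ]; field_simp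
    rw [← add_assoc]
    linarith [dist_triangle x y z]

lemma fhl_corkscrew (x₀ : Z) {R : ℝ} (hR : 0 < R) {x : Z}
    (hx : x ∈ closure (⋃ n, fhlA x₀ R n)) {s : ℝ} (hs : 0 < s) (hsR : s ≤ R) :
    ∃ z, dist x z ≤ s ∧ ball z (s / 16) ⊆ ball x s ∩ (⋃ n, fhlA x₀ R n) := by
  obtain ⟨n, hn1, hn2⟩ := exists_nat_pow_near_of_lt_one (x := s / R) (y := (1 / 2 : ℝ))
    (by positivity) ((div_le_one hR).2 hsR) (by norm_num) (by norm_num)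
  rw [lt_div_iff₀ hR, div_pow, one_pow] at hn1
  rw [div_le_iff₀ hR, div_pow, one_pow] at hn2
  set ρ := R / 2 ^ (n + 3) with hρ
  have hρ0 : 0 < ρ := by positivity
  have e1 : 1 / 2 ^ (n + 1) * R = 4 * ρ := by rw [hρ, pow_add, pow_add]; field_simp; norm_num
  have e2 : 1 / 2 ^ n * R = 8 * ρ := by rw [hρ, pow_add]; field_simp; norm_num
  rw [e1] at hn1
  rw [e2] at hn2
  obtain ⟨x', hx', hxx'⟩ := Metric.mem_closure_iff.1 hx ρ hρ0
  obtain ⟨m, hm⟩ := Set.mem_iUnion.1 hx'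
  have hm' : x' ∈ fhlA x₀ R ((n + 3) + m) := fhlA_mono x₀ hR (by omega) hm
  obtain ⟨z, hz, hxz⟩ := fhlA_chain x₀ _ _ _ hm'
  have h0 : 0 ≤ R / 2 ^ (n + 3 + m) := by positivity
  have hd : dist x z ≤ 2 * ρ := by linarith [dist_triangle x x' z]
  refine ⟨z, by linarith, fun y hy => ⟨?_, Set.mem_iUnion.2 ⟨n + 3 + 1, ?_⟩⟩⟩
  · simp only [mem_ball] at hy ⊢
    rw [dist_comm] at hd
    linarith [dist_triangle y z x]
  · refine mem_thickening_iff.2 ⟨z, hz, ?_⟩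
    have : R / 2 ^ (n + 3 + 1) = ρ / 2 := by rw [hρ, pow_succ]; field_simp
    simp only [mem_ball] at hy
    rw [this]; linarith

lemma fhl_exists [BorelSpace Z] [CompleteSpace Z] {ν : Measure Z} {Cν : ℝ} (hC : 1 ≤ Cν)
    (h : IsDoublingWith ν Cν) (x₀ : Z) {R : ℝ} (hR : 0 < R) :
    ∃ Z₀ : Set Z, IsCompact Z₀ ∧ ball x₀ R ⊆ Z₀ ∧
      IsDoublingWith (ν.comap (Subtype.val : Z₀ → Z)) (Cν ^ 7) := by
  have := fhl_proper h
  set A := ⋃ n, fhlA x₀ R n with hA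
  have hsub : A ⊆ closedBall x₀ (2 * R) := by
    refine Set.iUnion_subset fun n => (fhlA_sub x₀ n).trans ?_
    refine (ball_subset_ball ?_).trans ball_subset_closedBall
    have : 0 ≤ R / 2 ^ n := by positivity
    linarith
  have hsub' : closure A ⊆ closedBall x₀ (2 * R) := closure_minimal hsub isClosed_closedBall
  have hcomp : IsCompact (closure A) :=
    (isCompact_closedBall x₀ (2 * R)).of_isClosed_subset isClosed_closure hsub'
  refine ⟨closure A, hcomp, ?_, ?_⟩
  · exact (Set.subset_iUnion (fhlA x₀ R) 0).trans subset_closure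
  have hball : ∀ (x : closure A) (r : ℝ), ν.comap (Subtype.val : closure A → Z) (ball x r) =
      ν (ball (x : Z) r ∩ closure A) := by
    intro x r
    rw [comap_subtype_coe_apply isClosed_closure.measurableSet]
    congr 1
    ext y
    simp
  have key : ∀ (x : closure A) (r : ℝ), 0 < r → ∃ z : Z, ∃ s : ℝ, 0 < s ∧
      ball z (s / 16) ⊆ ball (x : Z) r ∩ closure A ∧
      ball (x : Z) (2 * r) ∩ closure A ⊆ ball z (2 ^ 7 * (s / 16)) := by
    intro x r hr
    have hs : 0 < min r R := lt_min hr hR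
    obtain ⟨z, hz1, hz2⟩ := fhl_corkscrew x₀ hR x.2 hs (min_le_right _ _)
    refine ⟨z, min r R, hs, hz2.trans ?_, ?_⟩
    · exact Set.inter_subset_inter (ball_subset_ball (min_le_left _ _)) subset_closure
    · rintro y ⟨hy1, hy2⟩
      have h1 := hsub' hy2
      have h2 := hsub' x.2
      simp only [mem_ball, mem_closedBall] at *
      have t1 := dist_triangle y x z
      have t2 := dist_triangle y x₀ x
      rw [dist_comm x₀] at t2
      rcases min_cases r R with ⟨e, _⟩ | ⟨e, _⟩ <;> rw [e] at hz1 ⊢ <;> linarith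
  intro x r hr
  rw [hball, hball]
  refine ⟨?_, ?_, ?_⟩
  · obtain ⟨z, s, hs, h1, -⟩ := key x (2 * r) (by positivity)
    exact (fhl_pos h z (s / 16) (by positivity)).trans_le (measure_mono h1)
  · obtain ⟨z, s, hs, h1, h2⟩ := key x r hr
    refine (measure_mono h2).trans ((fhl_iter h z _ (by positivity) 7).trans ?_)
    rw [ENNReal.ofReal_pow (by linarith)]
    gcongr
  · exact (measure_mono Set.inter_subset_left).trans_lt (fhl_lt_top h _ _)

/-- The kernel. -/
noncomputable def fhlk (ν : Measure Z) (s : ℝ) (x y : Z) : ℝ≥0∞ :=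
  (ENNReal.ofReal (dist x y ^ s) * ν (ball x (dist x y)))⁻¹

lemma fhlk_meas [BorelSpace Z] [SecondCountableTopology Z] (ν : Measure Z) [SFinite ν] (s : ℝ) :
    Measurable (fun q : Z × Z => fhlk ν s q.1 q.2) := by
  have h1 : Measurable (fun q : Z × Z => ν (ball q.1 (dist q.1 q.2))) := by
    have hS : MeasurableSet {w : (Z × Z) × Z | dist w.2 w.1.1 < dist w.1.1 w.1.2} := by
      refine (isOpen_lt ?_ ?_).measurableSet <;> fun_prop
    exact measurable_measure_prodMk_left (ν := ν) hS
  unfold fhlk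
  refine Measurable.inv (Measurable.mul ?_ h1)
  have : Measurable (fun q : Z × Z => dist q.1 q.2) := by fun_prop
  exact (this.pow_const s).ennreal_ofReal

lemma fhl_sec_left {f : Z → Z → ℝ≥0∞} (hf : Measurable (fun q : Z × Z => f q.1 q.2)) (x : Z) :
    Measurable (fun y => f x y) :=
  hf.comp (g := fun q : Z × Z => f q.1 q.2) (f := fun y => (x, y)) measurable_prodMk_left

lemma fhl_sec_right {f : Z → Z → ℝ≥0∞} (hf : Measurable (fun q : Z × Z => f q.1 q.2)) (y : Z) :
    Measurable (fun x => f x y) :=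
  hf.comp (g := fun q : Z × Z => f q.1 q.2) (f := fun x => (x, y)) measurable_prodMk_right

lemma fhlk_swap {ν : Measure Z} {Cν : ℝ} (hC : 1 ≤ Cν)
    (h : IsDoublingWith ν Cν) (s : ℝ) (x y : Z) (hxy : 0 < dist x y) :
    fhlk ν s x y ≤ ENNReal.ofReal Cν * fhlk ν s y x := by
  unfold fhlk
  have hc0 : ENNReal.ofReal Cν ≠ 0 := by
    rw [Ne, ENNReal.ofReal_eq_zero]; linarith
  have hct : ENNReal.ofReal Cν ≠ ⊤ := ENNReal.ofReal_ne_top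
  rw [dist_comm y x, ← ENNReal.inv_le_inv, inv_inv,
    ENNReal.mul_inv (Or.inl hc0) (Or.inl hct), inv_inv]
  have h1 : ν (ball y (dist x y)) ≤ ENNReal.ofReal Cν * ν (ball x (dist x y)) := by
    refine (measure_mono ?_).trans (h x (dist x y) hxy).2.1
    intro z hz
    simp only [mem_ball] at hz ⊢
    linarith [dist_triangle z y x, dist_comm x y]
  calc _ ≤ (ENNReal.ofReal Cν)⁻¹ * (ENNReal.ofReal (dist x y ^ s) *
        (ENNReal.ofReal Cν * ν (ball x (dist x y)))) := by gcongr
    _ = ((ENNReal.ofReal Cν)⁻¹ * ENNReal.ofReal Cν) * (ENNReal.ofReal (dist x y ^ s) *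
        ν (ball x (dist x y))) := by ring
    _ = _ := by rw [ENNReal.inv_mul_cancel hc0 hct, one_mul]

lemma fhl_tail [BorelSpace Z] {ν : Measure Z} {Cν : ℝ}
    (h : IsDoublingWith ν Cν) {s : ℝ} (hs : 0 < s) :
    ∃ T : ℝ≥0∞, T ≠ ⊤ ∧ ∀ x : Z, ∫⁻ y in (ball x 1)ᶜ, fhlk ν s x y ∂ν ≤ T := by
  set q := ENNReal.ofReal (2 ^ s) with hq
  have hq1 : 1 < q := by
    rw [hq, ← ENNReal.ofReal_one]
    exact (ENNReal.ofReal_lt_ofReal_iff (by positivity)).2 (Real.one_lt_rpow one_lt_two hs)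
  refine ⟨∑' k : ℕ, ENNReal.ofReal Cν * (q⁻¹) ^ k, ?_, fun x => ?_⟩
  · rw [ENNReal.tsum_mul_left, ENNReal.tsum_geometric]
    refine ENNReal.mul_ne_top ENNReal.ofReal_ne_top ?_
    rw [Ne, ENNReal.inv_eq_top]
    exact (tsub_pos_of_lt (ENNReal.inv_lt_one.2 hq1)).ne'
  have hcov : (ball x 1)ᶜ ⊆ ⋃ k : ℕ, (ball x (2 ^ (k + 1)) \ ball x (2 ^ k)) := by
    intro y hy
    simp only [mem_compl_iff, mem_ball, not_lt] at hy
    obtain ⟨k, hk1, hk2⟩ := exists_nat_pow_near hy (one_lt_two (α := ℝ))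
    exact Set.mem_iUnion.2 ⟨k, by simpa using hk2, by simpa using hk1⟩
  refine (lintegral_mono_set hcov).trans ((lintegral_iUnion_le _ _).trans ?_)
  refine ENNReal.tsum_le_tsum fun k => ?_
  have hb0 := (fhl_pos h x (2 ^ k) (by positivity)).ne'
  have hbt := (fhl_lt_top h x (2 ^ k)).ne
  have hpt : ∀ y ∈ ball x (2 ^ (k + 1)) \ ball x (2 ^ k),
      fhlk ν s x y ≤ (q ^ k * ν (ball x (2 ^ k)))⁻¹ := by
    rintro y ⟨-, hy⟩
    simp only [mem_ball, not_lt] at hy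
    rw [dist_comm] at hy
    unfold fhlk
    rw [ENNReal.inv_le_inv]
    have : q ^ k = ENNReal.ofReal ((2 ^ k) ^ s) := by
      rw [hq, ← ENNReal.ofReal_pow (by positivity), ← Real.rpow_natCast, ← Real.rpow_natCast,
        ← Real.rpow_mul (by norm_num), ← Real.rpow_mul (by norm_num), mul_comm]
    rw [this]
    gcongr
  calc _ ≤ ∫⁻ y in ball x (2 ^ (k + 1)) \ ball x (2 ^ k), (q ^ k * ν (ball x (2 ^ k)))⁻¹ ∂ν :=
        setLIntegral_mono' (measurableSet_ball.diff measurableSet_ball) hpt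
    _ = (q ^ k * ν (ball x (2 ^ k)))⁻¹ * ν (ball x (2 ^ (k + 1)) \ ball x (2 ^ k)) := by
        rw [setLIntegral_const]
    _ ≤ (q ^ k * ν (ball x (2 ^ k)))⁻¹ * (ENNReal.ofReal Cν * ν (ball x (2 ^ k))) := by
        gcongr
        refine (measure_mono Set.sdiff_subset).trans ?_
        rw [pow_succ']
        exact (h x (2 ^ k) (by positivity)).2.1
    _ = ENNReal.ofReal Cν * q⁻¹ ^ k * ((ν (ball x (2 ^ k)))⁻¹ * ν (ball x (2 ^ k))) := by
        rw [ENNReal.mul_inv (Or.inr hbt) (Or.inr hb0), ENNReal.inv_pow]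
        ring
    _ = _ := by rw [ENNReal.inv_mul_cancel hb0 hbt, mul_one]

set_option maxHeartbeats 400000 in
/-- Key energy comparison. -/
lemma fhl_energy [BorelSpace Z] [CompleteSpace Z] {ν : Measure Z} {Cν : ℝ} (hC : 1 ≤ Cν)
    (h : IsDoublingWith ν Cν) {s p : ℝ} (hs : 0 < s) (hp : 0 < p) (Ω Z₀ : Set Z) (hΩ : IsOpen Ω)
    (hZ₀ : IsCompact Z₀)
    (hsub : Ω ⊆ Z₀) (hsep : ∀ x ∈ Ω, ∀ y ∉ Z₀, 1 ≤ dist x y)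
    (hcase : Z₀ = univ ∨ 0 < ν (Z₀ \ Ω)) :
    ∃ Q : ℝ≥0∞, Q ≠ ⊤ ∧ ∀ u : Z → ℝ, Continuous u → (∀ x ∉ Ω, u x = 0) →
      ∫⁻ x, ∫⁻ y, ENNReal.ofReal (|u x - u y| ^ p) * fhlk ν s x y ∂ν ∂ν ≤
      Q * ∫⁻ x in Z₀, ∫⁻ y in Z₀, ENNReal.ofReal (|u x - u y| ^ p) * fhlk ν s x y ∂ν ∂ν := by
  rcases hcase with rfl | hpos
  · exact ⟨1, by simp, fun u _ _ => by simp⟩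
  have := fhl_proper h
  have : IsLocallyFiniteMeasure ν := ⟨fun x => ⟨ball x 1, ball_mem_nhds x one_pos,
    fhl_lt_top h x 1⟩⟩
  obtain ⟨T, hT, hTail⟩ := fhl_tail h hs
  obtain ⟨x₀, hx₀⟩ : Z₀.Nonempty := by
    rw [Set.nonempty_iff_ne_empty]; rintro rfl; simp at hpos
  obtain ⟨D, hD0, hD⟩ := hZ₀.isBounded.subset_ball_lt 1 x₀
  have hZm : MeasurableSet Z₀ := hZ₀.isClosed.measurableSet
  set M := ν (ball x₀ (3 * D)) with hM
  have hMt : M ≠ ⊤ := (fhl_lt_top h _ _).ne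
  have hM0 : M ≠ 0 := (fhl_pos h _ _ (by positivity)).ne'
  set V := ENNReal.ofReal ((2 * D) ^ s) with hV
  have hVt : V ≠ ⊤ := ENNReal.ofReal_ne_top
  set c := (V * M)⁻¹ * ν (Z₀ \ Ω) with hc
  have hc0 : c ≠ 0 := mul_ne_zero (ENNReal.inv_ne_zero.2 (ENNReal.mul_ne_top hVt hMt)) hpos.ne'
  refine ⟨1 + (1 + ENNReal.ofReal Cν) * T * c⁻¹, ?_, ?_⟩
  · refine ENNReal.add_ne_top.2 ⟨by simp, ENNReal.mul_ne_top (ENNReal.mul_ne_top ?_ hT) ?_⟩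
    · simp
    · simpa using hc0
  intro u hu hu0
  have hsf : SFinite ν := inferInstance
  have hsc : SecondCountableTopology Z := inferInstance
  have hkm : Measurable (fun q : Z × Z => fhlk ν s q.1 q.2) := fhlk_meas ν s
  have hkl : ∀ x, Measurable (fun y => fhlk ν s x y) := fhl_sec_left hkm
  have hkr : ∀ y, Measurable (fun x => fhlk ν s x y) := fhl_sec_right hkm
  set F : Z → Z → ℝ≥0∞ := fun x y => ENNReal.ofReal (|u x - u y| ^ p) * fhlk ν s x y with hF
  have hFm : Measurable (Function.uncurry F) := by
    have h1 : Measurable (fun q : Z × Z => |u q.1 - u q.2|) := by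
      have : Continuous (fun q : Z × Z => |u q.1 - u q.2|) := by fun_prop
      exact this.measurable
    have h2 : Measurable (fun q : Z × Z => ENNReal.ofReal (|u q.1 - u q.2| ^ p)) :=
      (h1.pow_const p).ennreal_ofReal
    have h3 : Measurable (fun q : Z × Z =>
      ENNReal.ofReal (|u q.1 - u q.2| ^ p) * fhlk ν s q.1 q.2) := h2.mul hkm
    exact h3
  set g : Z → ℝ≥0∞ := fun x => ENNReal.ofReal (|u x| ^ p) with hg
  have hgm : Measurable g := by
    have : Measurable (fun x => |u x|) := (continuous_abs.comp hu).measurable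
    exact (this.pow_const p).ennreal_ofReal
  have hg0 : ∀ x ∉ Ω, g x = 0 := fun x hx => by simp [hg, hu0 x hx, Real.zero_rpow hp.ne']
  have hF1 : ∀ x, ∀ y ∉ Ω, F x y = g x * fhlk ν s x y := fun x y hy => by
    simp [hF, hg, hu0 y hy]
  have hF2 : ∀ x ∉ Ω, ∀ y, F x y = g y * fhlk ν s x y := fun x hx y => by
    simp [hF, hg, hu0 x hx]
  set I₀ := ∫⁻ x in Z₀, ∫⁻ y in Z₀, F x y ∂ν ∂ν with hI₀
  -- lower bound
  have hlow : c * ∫⁻ x in Z₀, g x ∂ν ≤ I₀ := by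
    rw [← lintegral_const_mul _ hgm]
    refine setLIntegral_mono' hZm fun x hx => ?_
    by_cases hxΩ : x ∈ Ω
    swap
    · simp [hg0 x hxΩ]
    calc c * g x = ∫⁻ y in Z₀ \ Ω, g x * (V * M)⁻¹ ∂ν := by
          rw [setLIntegral_const, hc]; ring
      _ ≤ ∫⁻ y in Z₀ \ Ω, F x y ∂ν := by
          refine setLIntegral_mono' (hZm.diff hΩ.measurableSet) fun y hy => ?_
          rw [hF1 x y hy.2]
          gcongr
          unfold fhlk
          rw [ENNReal.inv_le_inv]
          have h1 := hD hx
          have h2 := hD hy.1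
          simp only [mem_ball] at h1 h2
          have h3 : dist x y ≤ 2 * D := by
            have := dist_triangle x x₀ y
            rw [dist_comm x₀] at this
            linarith
          refine mul_le_mul' ?_ (measure_mono ?_)
          · rw [hV]; gcongr
          · intro z hz
            simp only [mem_ball] at hz ⊢
            linarith [dist_triangle z x x₀]
      _ ≤ _ := lintegral_mono_set Set.sdiff_subset
  have hctop : c ≠ ⊤ := by
    refine ENNReal.mul_ne_top ?_ ?_
    · have : V ≠ 0 := by
        rw [hV, Ne, ENNReal.ofReal_eq_zero, not_le]; positivity
      simp [this, hM0]
    · exact ((measure_mono (Set.sdiff_subset.trans hD)).trans_lt (fhl_lt_top h x₀ D)).ne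
  have hlow' : ∫⁻ x in Z₀, g x ∂ν ≤ c⁻¹ * I₀ := by
    calc _ = c⁻¹ * (c * ∫⁻ x in Z₀, g x ∂ν) := by
          rw [← mul_assoc, ENNReal.inv_mul_cancel hc0 hctop, one_mul]
      _ ≤ _ := by gcongr
  -- first tail
  have htail1 : ∫⁻ x in Z₀, ∫⁻ y in Z₀ᶜ, F x y ∂ν ∂ν ≤ T * ∫⁻ x in Z₀, g x ∂ν := by
    rw [← lintegral_const_mul _ hgm]
    refine setLIntegral_mono' hZm fun x hx => ?_
    have e : ∫⁻ y in Z₀ᶜ, F x y ∂ν = g x * ∫⁻ y in Z₀ᶜ, fhlk ν s x y ∂ν := by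
      rw [← lintegral_const_mul _ (hkl x)]
      exact setLIntegral_congr_fun hZm.compl fun y hy => hF1 x y fun hy' => hy (hsub hy')
    rw [e, mul_comm]
    by_cases hxΩ : x ∈ Ω
    swap
    · simp [hg0 x hxΩ]
    gcongr
    refine (lintegral_mono_set ?_).trans (hTail x)
    intro y hy
    simpa [dist_comm y x] using hsep x hxΩ y hy
  -- second tail
  have htail2 : ∫⁻ x in Z₀ᶜ, ∫⁻ y, F x y ∂ν ∂ν ≤
      ENNReal.ofReal Cν * T * ∫⁻ x in Z₀, g x ∂ν := by
    calc ∫⁻ x in Z₀ᶜ, ∫⁻ y, F x y ∂ν ∂ν = ∫⁻ y, ∫⁻ x in Z₀ᶜ, F x y ∂ν ∂ν :=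
          lintegral_lintegral_swap hFm.aemeasurable
      _ ≤ ∫⁻ y, (Z₀.indicator (fun y => ENNReal.ofReal Cν * T * g y)) y ∂ν := by
          refine lintegral_mono fun y => ?_
          have e : ∫⁻ x in Z₀ᶜ, F x y ∂ν = g y * ∫⁻ x in Z₀ᶜ, fhlk ν s x y ∂ν := by
            rw [← lintegral_const_mul _ (hkr y)]
            exact setLIntegral_congr_fun hZm.compl fun x hx => hF2 x (fun hx' => hx (hsub hx')) y
          beta_reduce
          rw [e]
          by_cases hy : y ∈ Ω
          swap
          · simp [hg0 y hy]
          rw [Set.indicator_of_mem (hsub hy), mul_comm (g y)]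
          refine mul_le_mul_left ?_ (g y)
          calc ∫⁻ x in Z₀ᶜ, fhlk ν s x y ∂ν
              ≤ ∫⁻ x in Z₀ᶜ, ENNReal.ofReal Cν * fhlk ν s y x ∂ν := by
                refine setLIntegral_mono' hZm.compl fun x hx => fhlk_swap hC h s x y ?_
                rw [dist_comm]
                exact one_pos.trans_le (hsep y hy x hx)
            _ = ENNReal.ofReal Cν * ∫⁻ x in Z₀ᶜ, fhlk ν s y x ∂ν :=
                lintegral_const_mul _ (hkl y)
            _ ≤ _ := by
                gcongr
                refine (lintegral_mono_set ?_).trans (hTail y)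
                intro x hx
                simpa [dist_comm x y] using hsep y hy x hx
      _ = _ := by rw [lintegral_indicator hZm, lintegral_const_mul _ hgm]
  calc ∫⁻ x, ∫⁻ y, F x y ∂ν ∂ν
      = ∫⁻ x in Z₀, ∫⁻ y, F x y ∂ν ∂ν + ∫⁻ x in Z₀ᶜ, ∫⁻ y, F x y ∂ν ∂ν :=
        (lintegral_add_compl _ hZm).symm
    _ = (I₀ + ∫⁻ x in Z₀, ∫⁻ y in Z₀ᶜ, F x y ∂ν ∂ν) + ∫⁻ x in Z₀ᶜ, ∫⁻ y, F x y ∂ν ∂ν := by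
        congr 1
        rw [hI₀, ← lintegral_add_left hFm.lintegral_prod_right]
        refine lintegral_congr fun x => (lintegral_add_compl _ hZm).symm
    _ ≤ (I₀ + T * ∫⁻ x in Z₀, g x ∂ν) + ENNReal.ofReal Cν * T * ∫⁻ x in Z₀, g x ∂ν := by
        gcongr
    _ ≤ (I₀ + T * (c⁻¹ * I₀)) + ENNReal.ofReal Cν * T * (c⁻¹ * I₀) := by
        gcongr
    _ = _ := by ring

end helpers

/-- Localization (i): if `Z∖E` is bounded, nonempty and satisfies a `(θ,p)`-fractional
Hardy inequality in the complete doubling space `(Z,d,ν)`, then there is a compact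
`Z₀ ⊆ Z` with `Z∖E = Z₀∖E`, such that the restricted measure is doubling on the metric
space `Z₀` and `Z₀∖E` satisfies a `(θ,p)`-fractional Hardy inequality in
`(Z₀, d|_{Z₀×Z₀}, ν|_{Z₀})`. -/
theorem fracHardy_localization {Z : Type*} [MetricSpace Z] [MeasurableSpace Z]
    [BorelSpace Z] [CompleteSpace Z] (ν : Measure Z) {Cν : ℝ} (hCν : 1 ≤ Cν)
    (hdoub : IsDoublingWith ν Cν)
    (θ p : ℝ) (hθ₀ : 0 < θ) (hθ₁ : θ < 1) (hp : 1 < p)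
    (E : Set Z) (hE : IsClosed E) (hbdd : Bornology.IsBounded Eᶜ) (hne : Eᶜ.Nonempty)
    {C : ℝ} (hC : 1 ≤ C) (hHardy : FracHardy ν Eᶜ θ p C) :
    ∃ Z₀ : Set Z, IsCompact Z₀ ∧ Eᶜ = Z₀ \ E ∧
      (∃ C' : ℝ, 1 ≤ C' ∧
        IsDoublingWith (ν.comap (Subtype.val : Z₀ → Z)) C') ∧
      ∃ C'' : ℝ, 1 ≤ C'' ∧
        FracHardy (ν.comap (Subtype.val : Z₀ → Z))
          ((Subtype.val : Z₀ → Z) ⁻¹' Eᶜ) θ p C'' := by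
  have := fhl_proper hdoub
  obtain ⟨x₀, hx₀⟩ := hne
  obtain ⟨R₀, hR₀, hΩR₀⟩ := hbdd.subset_ball_lt 0 x₀
  -- choice of the radius
  obtain ⟨R, hR, hRcase⟩ : ∃ R : ℝ, R₀ + 1 ≤ R ∧
      (ball x₀ R = univ ∨ 0 < ν (ball x₀ R \ Eᶜ)) := by
    rcases eq_or_ne (ν E) 0 with h0 | h0
    · refine ⟨R₀ + 1, le_rfl, Or.inl ?_⟩
      rw [Set.eq_univ_iff_forall]
      intro y
      by_contra hy
      have hsub : ball y 1 ⊆ E := by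
        intro z hz
        by_contra hzE
        have h1 := hΩR₀ hzE
        simp only [mem_ball] at hy hz h1
        have := dist_triangle y z x₀
        rw [dist_comm y z] at this
        exact hy (by linarith)
      have := (fhl_pos hdoub y 1 one_pos).trans_le (measure_mono hsub)
      exact this.ne' h0
    · by_contra hcon
      push Not at hcon
      apply h0
      have hE' : E ⊆ ⋃ n : ℕ, (ball x₀ (R₀ + 1 + n) \ Eᶜ) := by
        intro y hy
        obtain ⟨n, hn⟩ := exists_nat_gt (dist y x₀)
        refine Set.mem_iUnion.2 ⟨n, ?_, by simpa using hy⟩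
        simp only [mem_ball]; linarith
      refine measure_mono_null hE' (measure_iUnion_null fun n => ?_)
      exact le_antisymm (hcon (R₀ + 1 + n) (by simp)).2 bot_le
  obtain ⟨Z₀, hcomp, hballsub, hdoub₀⟩ := fhl_exists hCν hdoub x₀ (R := R) (by linarith)
  have hΩZ₀ : Eᶜ ⊆ Z₀ := (hΩR₀.trans (ball_subset_ball (by linarith))).trans hballsub
  have hZm : MeasurableSet Z₀ := hcomp.isClosed.measurableSet
  have hsep : ∀ x ∈ Eᶜ, ∀ y ∉ Z₀, 1 ≤ dist x y := by
    intro x hx y hy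
    have h1 := hΩR₀ hx
    have h2 : y ∉ ball x₀ R := fun h => hy (hballsub h)
    simp only [mem_ball, not_lt] at h1 h2
    have := dist_triangle y x x₀
    rw [dist_comm y x] at this
    linarith
  have hcase : Z₀ = univ ∨ 0 < ν (Z₀ \ Eᶜ) := by
    rcases hRcase with h | h
    · exact Or.inl (Set.univ_subset_iff.1 (h ▸ hballsub))
    · exact Or.inr (h.trans_le (measure_mono (Set.sdiff_subset_sdiff_left hballsub)))
  have hEne : E.Nonempty → (Z₀ ∩ E).Nonempty := by
    intro hE'
    rcases hcase with h | h
    · simpa [h] using hE'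
    · have := nonempty_of_measure_ne_zero h.ne'
      simpa [Set.sdiff_compl] using this
  have hs : 0 < θ * p := by positivity
  obtain ⟨Q, hQ, hen⟩ := fhl_energy hCν hdoub hs (by linarith : 0 < p) Eᶜ Z₀ hE.isOpen_compl hcomp
    hΩZ₀ hsep hcase
  refine ⟨Z₀, hcomp, ?_, ⟨Cν ^ 7, one_le_pow₀ hCν, hdoub₀⟩,
    max 1 (C * Q.toReal), le_max_left _ _, ?_⟩
  · ext x
    exact ⟨fun hx => ⟨hΩZ₀ hx, hx⟩, fun hx => hx.2⟩
  intro u₀ ⟨K, hK⟩ hcs hts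
  set u : Z → ℝ := Function.extend Subtype.val u₀ 0 with hu
  have hu1 : ∀ x : Z₀, u x = u₀ x := fun x => Subtype.val_injective.extend_apply _ _ _
  have hu2 : ∀ x ∉ Z₀, u x = 0 := fun x hx => by
    rw [hu, Function.extend_apply' _ _ _ (by simpa using hx)]; rfl
  have hu0 : ∀ x ∉ Eᶜ, u x = 0 := by
    intro x hx
    by_cases hxZ : x ∈ Z₀
    · rw [hu1 ⟨x, hxZ⟩]
      by_contra hne
      exact hx (hts (subset_tsupport _ hne))
    · exact hu2 x hxZ
  have hsupp : Function.support u ⊆ Subtype.val '' tsupport u₀ := by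
    intro x hx
    by_cases hxZ : x ∈ Z₀
    · refine ⟨⟨x, hxZ⟩, subset_tsupport _ ?_, rfl⟩
      rw [Function.mem_support, ← hu1]; exact hx
    · exact absurd (hu2 x hxZ) hx
  have hKc : IsCompact (Subtype.val '' tsupport u₀) := IsCompact.image hcs continuous_subtype_val
  have htsu : tsupport u ⊆ Subtype.val '' tsupport u₀ := closure_minimal hsupp hKc.isClosed
  have hucs : HasCompactSupport u := hKc.of_isClosed_subset (isClosed_tsupport u) htsu
  have huE : tsupport u ⊆ Eᶜ := by
    refine htsu.trans ?_
    rintro _ ⟨x, hx, rfl⟩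
    exact hts hx
  obtain ⟨B, hB⟩ : ∃ B : ℝ, ∀ x, ‖u₀ x‖ ≤ B := hcs.exists_bound_of_continuous hK.continuous
  have hulip : LipschitzWith (max K B.toNNReal) u := by
    have key : ∀ x ∈ Z₀, ∀ y ∉ Z₀, |u x| ≤ (max K B.toNNReal : NNReal) * dist x y := by
      intro x hx y hy
      by_cases hxE : x ∈ Eᶜ
      · have h1 := hsep x hxE y hy
        have h2 : |u x| ≤ B := by rw [hu1 ⟨x, hx⟩]; exact hB _
        have h3 : B ≤ (max K B.toNNReal : NNReal) := by
          refine (Real.le_coe_toNNReal B).trans ?_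
          exact_mod_cast le_max_right K B.toNNReal
        have h4 : (0:ℝ) ≤ (max K B.toNNReal : NNReal) := NNReal.coe_nonneg _
        nlinarith
      · rw [hu0 x hxE, abs_zero]; positivity
    refine LipschitzWith.of_dist_le_mul fun x y => ?_
    rw [Real.dist_eq]
    by_cases hx : x ∈ Z₀ <;> by_cases hy : y ∈ Z₀
    · have h1 := hK.dist_le_mul ⟨x, hx⟩ ⟨y, hy⟩
      rw [Real.dist_eq, ← hu1, ← hu1, Subtype.dist_eq] at h1
      refine h1.trans ?_
      gcongr
      exact le_max_left _ _
    · rw [hu2 y hy, sub_zero]; exact key x hx y hy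
    · rw [hu2 x hx, zero_sub, abs_neg, dist_comm]; exact key y hy x hx
    · rw [hu2 x hx, hu2 y hy, sub_zero, abs_zero]; positivity
  have hmain := hHardy u ⟨_, hulip⟩ hucs huE
  have hen' := hen u hulip.continuous hu0
  set ν₀ := ν.comap (Subtype.val : Z₀ → Z) with hν₀
  have hνball : ∀ (x : Z₀) (r : ℝ), ν₀ (ball x r) ≤ ν (ball (x : Z) r) := by
    intro x r
    rw [hν₀, comap_subtype_coe_apply hZm]
    refine measure_mono ?_
    rintro _ ⟨y, hy, rfl⟩
    exact hy
  -- left-hand side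
  have hL : ∫⁻ x in (Subtype.val : Z₀ → Z) ⁻¹' Eᶜ, ENNReal.ofReal (|u₀ x| ^ p) /
      ENNReal.ofReal (infDist x ((Subtype.val : Z₀ → Z) ⁻¹' Eᶜ)ᶜ ^ (θ * p)) ∂ν₀ ≤
      ∫⁻ x in Eᶜ, ENNReal.ofReal (|u x| ^ p) / ENNReal.ofReal (infDist x Eᶜᶜ ^ (θ * p)) ∂ν := by
    have hmE : MeasurableSet ((Subtype.val : Z₀ → Z) ⁻¹' Eᶜ) :=
      hE.isOpen_compl.measurableSet.preimage measurable_subtype_coe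
    set G : Z → ℝ≥0∞ := fun x => ENNReal.ofReal (|u x| ^ p) /
      ENNReal.ofReal (infDist x Eᶜᶜ ^ (θ * p)) with hG
    calc _ ≤ ∫⁻ x in (Subtype.val : Z₀ → Z) ⁻¹' Eᶜ, G x ∂ν₀ := by
          refine lintegral_mono fun x => ?_
          simp only [hG]
          rw [hu1]
          gcongr
          · exact infDist_nonneg
          rw [← Set.preimage_compl, compl_compl]
          rcases E.eq_empty_or_nonempty with h | h
          · simp [h]
          · obtain ⟨z, hz1, hz2⟩ := hEne h
            refine (le_infDist ⟨⟨z, hz1⟩, hz2⟩).2 fun {y} hy => ?_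
            exact infDist_le_dist_of_mem (x := (x : Z)) hy
      _ = ∫⁻ x : Z₀, (Eᶜ.indicator G) x ∂ν₀ := by
          rw [← lintegral_indicator hmE]; rfl
      _ = ∫⁻ x in Z₀, (Eᶜ.indicator G) x ∂ν := lintegral_subtype_comap hZm _
      _ ≤ ∫⁻ x, (Eᶜ.indicator G) x ∂ν := setLIntegral_le_lintegral _ _
      _ = _ := lintegral_indicator hE.isOpen_compl.measurableSet _
  -- right-hand side
  have hRr : ∫⁻ x in Z₀, ∫⁻ y in Z₀, ENNReal.ofReal (|u x - u y| ^ p) * fhlk ν (θ * p) x y ∂ν ∂ν ≤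
      ∫⁻ x, ∫⁻ y, ENNReal.ofReal (|u₀ x - u₀ y| ^ p) /
          (ENNReal.ofReal (dist x y ^ (θ * p)) * ν₀ (ball x (dist x y))) ∂ν₀ ∂ν₀ := by
    rw [← lintegral_subtype_comap hZm]
    refine lintegral_mono fun x => ?_
    beta_reduce
    rw [← lintegral_subtype_comap hZm]
    refine lintegral_mono fun y => ?_
    beta_reduce
    rw [hu1, hu1, ENNReal.div_eq_inv_mul, mul_comm]
    unfold fhlk
    refine mul_le_mul_left (ENNReal.inv_le_inv.2 ?_) _
    exact mul_le_mul_right (hνball x (dist x y)) _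
  refine hL.trans (hmain.trans ?_)
  calc _ ≤ ENNReal.ofReal C * (Q * ∫⁻ x, ∫⁻ y, ENNReal.ofReal (|u₀ x - u₀ y| ^ p) /
          (ENNReal.ofReal (dist x y ^ (θ * p)) * ν₀ (ball x (dist x y))) ∂ν₀ ∂ν₀) := by
        gcongr
        refine le_trans (le_of_eq ?_) (hen'.trans ?_)
        · simp only [div_eq_mul_inv, fhlk]
        · gcongr
    _ = ENNReal.ofReal (C * Q.toReal) * ∫⁻ x, ∫⁻ y, ENNReal.ofReal (|u₀ x - u₀ y| ^ p) /
          (ENNReal.ofReal (dist x y ^ (θ * p)) * ν₀ (ball x (dist x y))) ∂ν₀ ∂ν₀ := by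
        rw [ENNReal.ofReal_mul (by linarith), ENNReal.ofReal_toReal hQ, mul_assoc]
    _ ≤ _ := by
        gcongr
        exact le_max_right _ _
end

section
/- Let (Z,d,ν) be a metric measure space with ν a doubling measure with constant C_ν, let 0<θ<1 and 1<p<∞, and let z₀ ∈ Z and R > 0. Then there exists a constant C₁ ≥ 1, depending only on C_ν, θ and p, such that for every z ∈ Z with d(z,z₀) ≤ R/2, ∫_{Z ∖ B(z₀,R)} d(z,w)^{−θp} ν(B(z, d(z,w)))^{−1} dν(w) ≤ C₁ R^{−θp}. -/
open MeasureTheory Metric Set ENNReal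

theorem shell_bound {Z : Type*} [MetricSpace Z] [MeasurableSpace Z] (ν : Measure Z) (Cν a : ℝ)
    (ha : 0 < a) (hC : 1 ≤ Cν) (h : IsDoublingWith ν Cν) (z : Z) (s : ℝ) (hs : 0 < s) :
    ∫⁻ w in (ball z (2 * s) \ ball z s),
      (ENNReal.ofReal (dist z w ^ a) * ν (ball z (dist z w)))⁻¹ ∂ν ≤
      ENNReal.ofReal (Cν * s ^ (-a)) := by
  have hsa : 0 < s ^ a := Real.rpow_pos_of_pos hs a
  have hpos : ν (ball z s) ≠ 0 := by
    have := (h z (s / 2) (by positivity)).1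
    rw [mul_div_cancel₀ s (two_ne_zero)] at this
    exact this.ne'
  have hfin : ν (ball z s) ≠ ⊤ := (h z s hs).2.2.ne
  calc ∫⁻ w in (ball z (2 * s) \ ball z s),
      (ENNReal.ofReal (dist z w ^ a) * ν (ball z (dist z w)))⁻¹ ∂ν
      ≤ ∫⁻ w in (ball z (2 * s) \ ball z s),
        (ENNReal.ofReal (s ^ a) * ν (ball z s))⁻¹ ∂ν := by
        refine setLIntegral_mono measurable_const ?_
        intro w hw
        have hd : s ≤ dist z w := by
          have := hw.2
          rw [mem_ball, not_lt, dist_comm] at this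
          exact this
        gcongr
    _ ≤ (ENNReal.ofReal (s ^ a) * ν (ball z s))⁻¹ * (ENNReal.ofReal Cν * ν (ball z s)) := by
        rw [setLIntegral_const]
        gcongr
        exact (measure_mono sdiff_subset).trans (h z s hs).2.1
    _ = ENNReal.ofReal (Cν * s ^ (-a)) := by
        rw [ENNReal.mul_inv (Or.inr hfin) (Or.inr hpos), Real.rpow_neg hs.le,
          ENNReal.ofReal_mul (by linarith), ENNReal.ofReal_inv_of_pos hsa,
          show ∀ x y u v : ENNReal, x * y * (u * v) = u * x * (y * v) by intros; ring,
          ENNReal.inv_mul_cancel hpos hfin, mul_one]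

theorem tail_integral_estimate :
    ∃ C₁ : ℝ → ℝ → ℝ → ℝ,
      ∀ Cν θ p : ℝ, 1 ≤ Cν → 0 < θ → θ < 1 → 1 < p →
        1 ≤ C₁ Cν θ p ∧
        ∀ (Z : Type) [MetricSpace Z] [MeasurableSpace Z] (ν : Measure Z),
          IsDoublingWith ν Cν →
          ∀ (z₀ : Z) (R : ℝ), 0 < R → ∀ z : Z, dist z z₀ ≤ R / 2 →
            ∫⁻ w in (ball z₀ R)ᶜ,
                (ENNReal.ofReal (dist z w ^ (θ * p)) * ν (ball z (dist z w)))⁻¹ ∂ν ≤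
              ENNReal.ofReal (C₁ Cν θ p * R ^ (-(θ * p))) := by
  refine ⟨fun Cν θ p => Cν * 2 ^ (θ * p) * (1 - 2 ^ (-(θ * p)))⁻¹, ?_⟩
  intro Cν θ p hC hθ _ hp
  have ha : 0 < θ * p := by positivity
  beta_reduce
  generalize θ * p = a at ha ⊢
  have hq0 : (0 : ℝ) < 2 ^ (-a) := by positivity
  have hq1 : (2 : ℝ) ^ (-a) < 1 := Real.rpow_lt_one_of_one_lt_of_neg (by norm_num) (by linarith)
  have h2a : (1 : ℝ) ≤ 2 ^ a := Real.one_le_rpow (by norm_num) ha.le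
  constructor
  · have h3 : (1 : ℝ) ≤ (1 - 2 ^ (-a))⁻¹ := (one_le_inv₀ (by linarith)).2 (by linarith)
    exact one_le_mul_of_one_le_of_one_le (one_le_mul_of_one_le_of_one_le hC h2a) h3
  intro Z _ _ ν h z₀ R hR z hz
  have hsub : (ball z₀ R)ᶜ ⊆
      ⋃ k : ℕ, (ball z (2 * (2 ^ k * (R / 2))) \ ball z (2 ^ k * (R / 2))) := by
    intro w hw
    rw [mem_compl_iff, mem_ball, not_lt] at hw
    have hd : R / 2 ≤ dist w z := by
      have := dist_triangle w z z₀
      linarith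
    obtain ⟨k, hk1, hk2⟩ := exists_nat_pow_near (x := dist w z / (R / 2)) (y := (2 : ℝ))
      ((one_le_div (by positivity)).2 hd) (by norm_num)
    rw [le_div_iff₀ (by positivity)] at hk1
    rw [div_lt_iff₀ (by positivity), pow_succ'] at hk2
    refine mem_iUnion.2 ⟨k, ?_, ?_⟩
    · rw [mem_ball]; linarith
    · rw [mem_ball, not_lt]; exact hk1
  calc _ ≤ ∫⁻ w in ⋃ k : ℕ, (ball z (2 * (2 ^ k * (R / 2))) \ ball z (2 ^ k * (R / 2))),
          (ENNReal.ofReal (dist z w ^ a) * ν (ball z (dist z w)))⁻¹ ∂ν :=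
        lintegral_mono_set hsub
    _ ≤ ∑' k : ℕ, ∫⁻ w in (ball z (2 * (2 ^ k * (R / 2))) \ ball z (2 ^ k * (R / 2))),
          (ENNReal.ofReal (dist z w ^ a) * ν (ball z (dist z w)))⁻¹ ∂ν :=
        lintegral_iUnion_le _ _
    _ ≤ ∑' k : ℕ, ENNReal.ofReal (Cν * 2 ^ a * R ^ (-a) * ((2 : ℝ) ^ (-a)) ^ k) := by
        refine ENNReal.tsum_le_tsum fun k => ?_
        refine (shell_bound ν Cν a ha hC h z _ (by positivity)).trans (le_of_eq ?_)
        congr 1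
        rw [Real.mul_rpow (by positivity) (by positivity), Real.div_rpow hR.le (by norm_num),
          ← Real.rpow_natCast, ← Real.rpow_mul (by norm_num), ← Real.rpow_natCast,
          ← Real.rpow_mul (by norm_num), mul_comm (k : ℝ), show (2 : ℝ) ^ a = ((2 : ℝ) ^ (-a))⁻¹ by rw [Real.rpow_neg (zero_le_two), inv_inv]]
        ring
    _ = ENNReal.ofReal (Cν * 2 ^ a * (1 - 2 ^ (-a))⁻¹ * R ^ (-a)) := by
        rw [← ENNReal.ofReal_tsum_of_nonneg (fun k => by positivity)
          ((summable_geometric_of_lt_one hq0.le hq1).mul_left _), tsum_mul_left,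
          tsum_geometric_of_lt_one hq0.le hq1]
        congr 1
        ring
end

section
/- Let n ≥ 1, 0<θ<1 and 1<p<∞ with θp < n, and let Ω = B(0,1)∖{0} ⊂ ℝⁿ be the punctured open unit ball. Then Ω satisfies a (θ,p)-fractional Hardy inequality with respect to Lebesgue measure: there exists a constant C ≥ 1 such that for every Lipschitz function u : ℝⁿ → ℝ with compact support contained in Ω, ∫_Ω |u(x)|^p / dist(x, ℝⁿ∖Ω)^{θp} dx ≤ C ∫_{ℝⁿ} ∫_{ℝⁿ} |u(x)−u(y)|^p / (|x−y|^{θp} · Lⁿ(B(x,|x−y|))) dy dx, where Lⁿ is n-dimensional Lebesgue measure. -/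
open MeasureTheory Metric Set ENNReal

/-- elementary convexity-type bound -/
theorem fh_abs_rpow_le (p : ℝ) (hp : 1 < p) (a b : ℝ) :
    |a| ^ p ≤ 2 ^ p * (|b| ^ p + |a - b| ^ p) := by
  have hb : 0 ≤ |b| ^ p := by positivity
  have hab : 0 ≤ |a - b| ^ p := by positivity
  have h2 : (0:ℝ) ≤ 2 ^ p := by positivity
  have h : |a| ≤ |b| + |a - b| := by
    have := abs_add_le b (a - b)
    simpa using this
  rcases le_total (|b|) (|a - b|) with h1 | h1
  · have : |a| ^ p ≤ (2 * |a - b|) ^ p := by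
      apply Real.rpow_le_rpow (abs_nonneg _) (by linarith) (by linarith)
    rw [Real.mul_rpow (by norm_num) (abs_nonneg _)] at this
    nlinarith
  · have : |a| ^ p ≤ (2 * |b|) ^ p := by
      apply Real.rpow_le_rpow (abs_nonneg _) (by linarith) (by linarith)
    rw [Real.mul_rpow (by norm_num) (abs_nonneg _)] at this
    nlinarith

theorem fh_vol (n : ℕ) (x : EuclideanSpace ℝ (Fin n)) {r : ℝ} (hr : 0 ≤ r) (hn : 1 ≤ n) :
    (volume : Measure (EuclideanSpace ℝ (Fin n))) (ball x r) = ENNReal.ofReal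
      (r ^ (n:ℝ) * (volume (ball (0 : EuclideanSpace ℝ (Fin n)) 1)).toReal) := by
  have : Nonempty (Fin n) := ⟨⟨0, hn⟩⟩
  rw [Measure.addHaar_ball _ _ hr, ENNReal.ofReal_mul (by positivity),
    ENNReal.ofReal_toReal measure_ball_lt_top.ne]
  simp

theorem fh_c_pos (n : ℕ) :
    0 < (volume (ball (0 : EuclideanSpace ℝ (Fin n)) 1)).toReal :=
  ENNReal.toReal_pos (measure_ball_pos _ _ one_pos).ne' measure_ball_lt_top.ne

/-- kernel lower bound -/
theorem fh_kernel (n : ℕ) (hn : 1 ≤ n) (s : ℝ) (hs : 0 < s)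
    (x y : EuclideanSpace ℝ (Fin n)) (D : ℝ) (hxy : x ≠ y) (hD : dist x y ≤ D) :
    ENNReal.ofReal (D ^ (-(s + n))) ≤
      ENNReal.ofReal (volume (ball (0 : EuclideanSpace ℝ (Fin n)) 1)).toReal *
      (ENNReal.ofReal (dist x y ^ s) * volume (ball x (dist x y)))⁻¹ := by
  have hc := fh_c_pos n
  set c := (volume (ball (0 : EuclideanSpace ℝ (Fin n)) 1)).toReal with hcdef
  have hd : 0 < dist x y := dist_pos.2 hxy
  rw [fh_vol n x hd.le hn, ← hcdef, ← ENNReal.ofReal_mul (by positivity),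
    ← ENNReal.ofReal_inv_of_pos (by positivity), ← ENNReal.ofReal_mul (by positivity)]
  apply ENNReal.ofReal_le_ofReal
  rw [Real.rpow_neg (by linarith)]
  have e : dist x y ^ s * (dist x y ^ (n:ℝ) * c) = dist x y ^ (s + n) * c := by
    rw [Real.rpow_add hd]; ring
  rw [e, mul_inv, mul_comm (_⁻¹) (c⁻¹), ← mul_assoc, mul_inv_cancel₀ hc.ne', one_mul]
  apply inv_anti₀ (by positivity)
  apply Real.rpow_le_rpow hd.le hD (by positivity)

/-- boundary part -/
theorem fh_boundary (n : ℕ) (hn : 1 ≤ n) (p s : ℝ) (hs : 0 < s) :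
    ∃ C : ℝ, 0 ≤ C ∧ ∀ u : EuclideanSpace ℝ (Fin n) → ℝ,
      tsupport u ⊆ ball 0 1 \ {0} → ∀ x ∈ ball (0 : EuclideanSpace ℝ (Fin n)) 1 \ {0},
      ENNReal.ofReal (|u x| ^ p) * (ENNReal.ofReal ((1 - ‖x‖) ^ s))⁻¹ ≤
        ENNReal.ofReal C * ∫⁻ y, ENNReal.ofReal (|u x - u y| ^ p) /
          (ENNReal.ofReal (dist x y ^ s) * volume (ball x (dist x y))) := by
  refine ⟨3 ^ (s + n), by positivity, ?_⟩
  intro u hu x hx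
  have hc := fh_c_pos n
  set c := (volume (ball (0 : EuclideanSpace ℝ (Fin n)) 1)).toReal with hcdef
  have hx1 : ‖x‖ < 1 := by simpa using hx.1
  have hx0 : 0 < ‖x‖ := by simpa using hx.2
  set δ := 1 - ‖x‖ with hδ
  have hδ0 : 0 < δ := by linarith
  set z := x + (2 * δ / ‖x‖) • x with hz
  have hnz : ‖z‖ = ‖x‖ + 2 * δ := by
    have : z = (1 + 2 * δ / ‖x‖) • x := by rw [hz, add_smul, one_smul]
    rw [this, norm_smul, Real.norm_of_nonneg (by positivity)]
    field_simp
  have hdz : dist x z = 2 * δ := by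
    rw [hz, dist_self_add_right, norm_smul, Real.norm_of_nonneg (by positivity)]
    field_simp
  have key : ∀ y ∈ ball z δ, ENNReal.ofReal (|u x| ^ p) * ENNReal.ofReal ((3 * δ) ^ (-(s + n))) ≤
      ENNReal.ofReal c * (ENNReal.ofReal (|u x - u y| ^ p) /
          (ENNReal.ofReal (dist x y ^ s) * volume (ball x (dist x y)))) := by
    intro y hy
    have hy' : dist y z < δ := hy
    have hyn : 1 ≤ ‖y‖ := by
      have := norm_sub_norm_le z y
      rw [← dist_eq_norm, dist_comm] at this
      linarith
    have huy : u y = 0 := by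
      by_contra h
      have := hu (subset_tsupport u h)
      have h2 : ‖y‖ < 1 := by simpa using this.1
      linarith
    have hxy : x ≠ y := by rintro rfl; linarith
    have hd : dist x y ≤ 3 * δ := by
      have := dist_triangle x z y
      rw [dist_comm z y] at this
      linarith
    rw [huy, sub_zero, div_eq_mul_inv, mul_left_comm]
    gcongr
    exact fh_kernel n hn s hs x y _ hxy hd
  have int : ENNReal.ofReal (|u x| ^ p) * ENNReal.ofReal ((3 * δ) ^ (-(s + n))) *
      volume (ball z δ) ≤ ENNReal.ofReal c * ∫⁻ y, ENNReal.ofReal (|u x - u y| ^ p) /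
          (ENNReal.ofReal (dist x y ^ s) * volume (ball x (dist x y))) := by
    rw [← setLIntegral_const, ← lintegral_const_mul' _ _ ENNReal.ofReal_ne_top]
    refine (setLIntegral_mono' measurableSet_ball key).trans (setLIntegral_le_lintegral _ _)
  have hcne : ENNReal.ofReal c ≠ 0 := by simpa using hc
  rw [← ENNReal.mul_le_mul_iff_right hcne ENNReal.ofReal_ne_top, mul_left_comm _ (ENNReal.ofReal (3 ^ _))]
  refine le_trans (le_of_eq ?_) (mul_le_mul_right int _)
  rw [fh_vol n z hδ0.le hn, ← hcdef, ← ENNReal.ofReal_inv_of_pos (by positivity)]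
  have hu0 : 0 ≤ |u x| ^ p := by positivity
  rw [← ENNReal.ofReal_mul (by positivity), ← ENNReal.ofReal_mul (by positivity),
    ← ENNReal.ofReal_mul (by positivity), ← ENNReal.ofReal_mul (by positivity),
    ← ENNReal.ofReal_mul (by positivity)]
  congr 1
  rw [Real.mul_rpow (by norm_num) hδ0.le, Real.rpow_neg (by norm_num), Real.rpow_neg hδ0.le,
    Real.rpow_add hδ0]
  field_simp

/-- finiteness of the weighted integral -/
theorem fh_finite (n : ℕ) (p s : ℝ) (hp : 1 < p)
    (u : EuclideanSpace ℝ (Fin n) → ℝ) (huc : Continuous u) (hcs : HasCompactSupport u)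
    (h0 : (0 : EuclideanSpace ℝ (Fin n)) ∉ tsupport u) :
    ∫⁻ x, ENNReal.ofReal (|u x| ^ p) * ENNReal.ofReal (‖x‖ ^ (-s)) ≠ ⊤ := by
  have hne : ∀ x ∈ tsupport u, ‖x‖ ≠ 0 := by
    intro x hx h
    rw [norm_eq_zero] at h
    exact h0 (h ▸ hx)
  have hcont : ContinuousOn (fun x => |u x| ^ p * ‖x‖ ^ (-s)) (tsupport u) := by
    apply ContinuousOn.mul
    · exact (huc.abs.rpow_const (fun x => Or.inr (by linarith))).continuousOn
    · exact continuous_norm.continuousOn.rpow_const (fun x hx => Or.inl (hne x hx))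
  have hint : IntegrableOn (fun x => |u x| ^ p * ‖x‖ ^ (-s)) (tsupport u) :=
    hcont.integrableOn_compact hcs
  have e : ∫⁻ x, ENNReal.ofReal (|u x| ^ p) * ENNReal.ofReal (‖x‖ ^ (-s)) =
      ∫⁻ x in tsupport u, ENNReal.ofReal (|u x| ^ p * ‖x‖ ^ (-s)) := by
    rw [setLIntegral_eq_of_support_subset]
    · refine lintegral_congr fun x => ?_
      rw [ENNReal.ofReal_mul (by positivity)]
    · intro x hx
      apply subset_tsupport
      intro h
      apply hx
      simp [h, Real.zero_rpow (by linarith : p ≠ 0)]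
  rw [e]
  exact hint.lintegral_lt_top.ne

theorem fh_exists_R (p s d : ℝ) (hsd : s < d) :
    ∃ R : ℝ, 1 < R ∧ 2 ^ p * 2 ^ (s + d) * R ^ s ≤ R ^ d / 2 := by
  have := (tendsto_rpow_atTop (sub_pos.2 hsd)).eventually_ge_atTop (2 * (2 ^ p * 2 ^ (s + d)))
  obtain ⟨R, hR, hR1⟩ := (this.and (Filter.eventually_gt_atTop 1)).exists
  refine ⟨R, hR1, ?_⟩
  have hR0 : 0 < R := by linarith
  have e : R ^ d = R ^ (d - s) * R ^ s := by rw [← Real.rpow_add hR0]; ring_nf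
  rw [e]
  have : 0 < R ^ s := by positivity
  nlinarith

/-- the averaging kernel -/
theorem fh_G (n : ℕ) (hn : 1 ≤ n) (s : ℝ) (hs : 0 < s) (R : ℝ) (hR1 : 1 < R) :
    ∃ G : EuclideanSpace ℝ (Fin n) → EuclideanSpace ℝ (Fin n) → ℝ≥0∞, Measurable (Function.uncurry G) ∧
      (∀ x, x ≠ 0 → ENNReal.ofReal ((volume (ball (0 : EuclideanSpace ℝ (Fin n)) 1)).toReal * R ^ (n:ℝ)) *
        ENNReal.ofReal (‖x‖ ^ (-s)) ≤ ∫⁻ y, G x y) ∧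
      (∀ y, y ≠ 0 → ∫⁻ x, G x y ≤
        ENNReal.ofReal ((volume (ball (0 : EuclideanSpace ℝ (Fin n)) 1)).toReal * (2 ^ (s + n) * R ^ s)) *
          ENNReal.ofReal (‖y‖ ^ (-s))) ∧
      (∀ x y, G x y ≤ ENNReal.ofReal ((1 + 2 * R) ^ (s + n) *
        (volume (ball (0 : EuclideanSpace ℝ (Fin n)) 1)).toReal) *
        (ENNReal.ofReal (dist x y ^ s) * volume (ball x (dist x y)))⁻¹) := by
  have hR0 : 0 < R := by linarith
  have hc := fh_c_pos n
  set c := (volume (ball (0 : EuclideanSpace ℝ (Fin n)) 1)).toReal with hcdef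
  let S : Set (EuclideanSpace ℝ (Fin n) × EuclideanSpace ℝ (Fin n)) :=
    {q | R * ‖q.1‖ ≤ ‖q.2‖ ∧ ‖q.2‖ < 2 * R * ‖q.1‖}
  have hS : MeasurableSet S := by
    have m1 : Measurable (fun q : EuclideanSpace ℝ (Fin n) × EuclideanSpace ℝ (Fin n) => ‖q.2‖) := by
      fun_prop
    have m2 : Measurable
        (fun q : EuclideanSpace ℝ (Fin n) × EuclideanSpace ℝ (Fin n) => R * ‖q.1‖) := by
      fun_prop
    have m3 : Measurable
        (fun q : EuclideanSpace ℝ (Fin n) × EuclideanSpace ℝ (Fin n) => 2 * R * ‖q.1‖) := by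
      fun_prop
    exact (measurableSet_le m2 m1).inter (measurableSet_lt m1 m3)
  let G : EuclideanSpace ℝ (Fin n) → EuclideanSpace ℝ (Fin n) → ℝ≥0∞ := fun x y =>
    S.indicator (fun q => ENNReal.ofReal (‖q.1‖ ^ (-(s + n)))) (x, y)
  have hGm : Measurable (Function.uncurry G) := by
    have : Measurable (S.indicator (fun q => ENNReal.ofReal (‖q.1‖ ^ (-(s + n))))) :=
      Measurable.indicator (by fun_prop) hS
    exact this
  -- lower bound of the y integral
  have hlow : ∀ x, x ≠ 0 → ENNReal.ofReal (c * R ^ (n:ℝ)) * ENNReal.ofReal (‖x‖ ^ (-s)) ≤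
      ∫⁻ y, G x y := by
    intro x hx
    have hx0 : 0 < ‖x‖ := norm_pos_iff.2 hx
    let A : Set (EuclideanSpace ℝ (Fin n)) := ball 0 (2 * R * ‖x‖) \ ball 0 (R * ‖x‖)
    have hA : MeasurableSet A := measurableSet_ball.diff measurableSet_ball
    have hG : ∫⁻ y in A, ENNReal.ofReal (‖x‖ ^ (-(s + n))) ≤ ∫⁻ y, G x y := by
      rw [← lintegral_indicator hA]
      apply lintegral_mono
      intro y
      by_cases hy : y ∈ A
      · have : (x, y) ∈ S := by
          have h1 : ‖y‖ < 2 * R * ‖x‖ := by simpa using hy.1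
          have h2 : R * ‖x‖ ≤ ‖y‖ := by simpa using hy.2
          exact ⟨h2, h1⟩
        simp [G, hy, this]
      · simp [hy]
    refine le_trans ?_ hG
    rw [setLIntegral_const]
    have hvol : ENNReal.ofReal ((R * ‖x‖) ^ (n:ℝ) * c) ≤ volume A := by
      refine le_trans ?_ (le_measure_sdiff (μ := volume))
      rw [fh_vol n 0 (r := 2 * R * ‖x‖) (by positivity) hn,
        fh_vol n 0 (r := R * ‖x‖) (by positivity) hn, ← hcdef,
        ← ENNReal.ofReal_sub _ (by positivity)]
      apply ENNReal.ofReal_le_ofReal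
      have e : (2 * R * ‖x‖) ^ (n:ℝ) = 2 ^ (n:ℝ) * (R * ‖x‖) ^ (n:ℝ) := by
        rw [← Real.mul_rpow (by norm_num) (by positivity), mul_assoc]
      have h2 : (2:ℝ) ≤ 2 ^ (n:ℝ) := by
        conv_lhs => rw [← Real.rpow_one 2]
        apply Real.rpow_le_rpow_of_exponent_le (by norm_num)
        exact_mod_cast hn
      rw [e]
      have : 0 < (R * ‖x‖) ^ (n:ℝ) * c := by positivity
      nlinarith
    refine le_trans (le_of_eq ?_) (mul_le_mul_right hvol _)
    rw [← ENNReal.ofReal_mul (by positivity), ← ENNReal.ofReal_mul (by positivity)]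
    congr 1
    rw [Real.mul_rpow hR0.le hx0.le, Real.rpow_neg hx0.le, Real.rpow_neg hx0.le, Real.rpow_add hx0]
    field_simp
  -- upper bound of the x integral
  have hup : ∀ y, y ≠ 0 → ∫⁻ x, G x y ≤
      ENNReal.ofReal (c * (2 ^ (s + n) * R ^ s)) * ENNReal.ofReal (‖y‖ ^ (-s)) := by
    intro y hy
    have hy0 : 0 < ‖y‖ := norm_pos_iff.2 hy
    have hG : ∫⁻ x, G x y ≤ ∫⁻ x in closedBall (0 : EuclideanSpace ℝ (Fin n)) (‖y‖ / R),
        ENNReal.ofReal ((‖y‖ / (2 * R)) ^ (-(s + n))) := by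
      rw [← lintegral_indicator measurableSet_closedBall]
      apply lintegral_mono
      intro x
      by_cases hq : (x, y) ∈ S
      · have h1 : R * ‖x‖ ≤ ‖y‖ := hq.1
        have h2 : ‖y‖ < 2 * R * ‖x‖ := hq.2
        have hxb : x ∈ closedBall (0 : EuclideanSpace ℝ (Fin n)) (‖y‖ / R) := by
          rw [mem_closedBall_zero_iff, le_div_iff₀ hR0]; linarith
        simp only [G, indicator_of_mem hq, indicator_of_mem hxb]
        apply ENNReal.ofReal_le_ofReal
        apply Real.rpow_le_rpow_of_nonpos (by positivity)
        · rw [div_le_iff₀ (by positivity)]; linarith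
        · have : (0:ℝ) ≤ n := by positivity
          linarith
      · simp [G, hq]
    refine hG.trans (le_of_eq ?_)
    have : Nonempty (Fin n) := ⟨⟨0, hn⟩⟩
    rw [setLIntegral_const, Measure.addHaar_closedBall_eq_addHaar_ball,
      fh_vol n 0 (r := ‖y‖ / R) (by positivity) hn, ← hcdef,
      ← ENNReal.ofReal_mul (by positivity), ← ENNReal.ofReal_mul (by positivity)]
    congr 1
    rw [Real.rpow_neg (by positivity), Real.div_rpow hy0.le (by positivity),
      Real.div_rpow hy0.le (by positivity), Real.mul_rpow (by norm_num) hR0.le,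
      Real.rpow_neg hy0.le, Real.rpow_add hy0, Real.rpow_add hR0]
    field_simp
  -- pointwise kernel comparison
  have hker : ∀ x y, G x y ≤ ENNReal.ofReal ((1 + 2 * R) ^ (s + n) * c) *
      (ENNReal.ofReal (dist x y ^ s) * volume (ball x (dist x y)))⁻¹ := by
    intro x y
    by_cases hq : (x, y) ∈ S
    · have h1 : R * ‖x‖ ≤ ‖y‖ := hq.1
      have h2 : ‖y‖ < 2 * R * ‖x‖ := hq.2
      have hx0 : 0 < ‖x‖ := by
        by_contra h
        have : ‖x‖ = 0 := le_antisymm (not_lt.1 h) (norm_nonneg _)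
        rw [this] at h1 h2
        linarith
      have hxy : x ≠ y := by rintro rfl; nlinarith
      have hd : dist x y ≤ (1 + 2 * R) * ‖x‖ := by
        rw [dist_eq_norm]
        have := norm_sub_le x y
        linarith
      have hk := fh_kernel n hn s hs x y _ hxy hd
      simp only [G, indicator_of_mem hq]
      rw [ENNReal.ofReal_mul (by positivity), mul_assoc]
      refine le_trans (le_of_eq ?_) (mul_le_mul_right hk _)
      rw [← ENNReal.ofReal_mul (by positivity)]
      congr 1
      rw [Real.mul_rpow (by positivity) hx0.le, Real.rpow_neg (by positivity : 0 ≤ 1 + 2 * R)]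
      have : 0 < (1 + 2 * R) ^ (s + n) := by positivity
      field_simp
    · simp [G, hq]
  exact ⟨G, hGm, hlow, hup, hker⟩

/-- the origin part -/
theorem fh_origin (n : ℕ) (hn : 1 ≤ n) (p s : ℝ) (hp : 1 < p) (hs : 0 < s) (hsn : s < n) :
    ∃ C : ℝ, 0 ≤ C ∧ ∀ u : EuclideanSpace ℝ (Fin n) → ℝ, Continuous u → HasCompactSupport u →
      (0 : EuclideanSpace ℝ (Fin n)) ∉ tsupport u →
      ∫⁻ x, ENNReal.ofReal (|u x| ^ p) * ENNReal.ofReal (‖x‖ ^ (-s)) ≤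
        ENNReal.ofReal C * ∫⁻ x, ∫⁻ y, ENNReal.ofReal (|u x - u y| ^ p) /
          (ENNReal.ofReal (dist x y ^ s) * volume (ball x (dist x y))) := by
  obtain ⟨R, hR1, hR⟩ := fh_exists_R p s n hsn
  have hR0 : 0 < R := by linarith
  have hc := fh_c_pos n
  set c := (volume (ball (0 : EuclideanSpace ℝ (Fin n)) 1)).toReal with hcdef
  refine ⟨(c * R ^ (n:ℝ) / 2)⁻¹ * (2 ^ p * ((1 + 2 * R) ^ (s + n) * c)), by positivity, ?_⟩
  intro u huc hcs h0
  have hfin := fh_finite n p s hp u huc hcs h0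
  set F := ∫⁻ x, ENNReal.ofReal (|u x| ^ p) * ENNReal.ofReal (‖x‖ ^ (-s)) with hF
  set J := ∫⁻ x, ∫⁻ y, ENNReal.ofReal (|u x - u y| ^ p) /
          (ENNReal.ofReal (dist x y ^ s) * volume (ball x (dist x y))) with hJ
  obtain ⟨G, hGm, hlow, hup, hker⟩ := fh_G n hn s hs R hR1
  rw [← hcdef] at hlow hup hker
  have hum : Measurable u := huc.measurable
  have hGx : ∀ x, Measurable (G x) := fun x => hGm.comp measurable_prodMk_left
  have hGy : ∀ y, Measurable (fun x => G x y) := fun y => hGm.comp measurable_prodMk_right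
  have hu0 : u 0 = 0 := image_eq_zero_of_notMem_tsupport h0
  have hp0 : p ≠ 0 := by linarith
  -- step 1
  have s1 : ENNReal.ofReal (c * R ^ (n:ℝ)) * F ≤
      ∫⁻ x, ∫⁻ y, ENNReal.ofReal (|u x| ^ p) * G x y := by
    rw [hF, ← lintegral_const_mul' _ _ ENNReal.ofReal_ne_top]
    apply lintegral_mono
    intro x
    dsimp only
    rw [lintegral_const_mul _ (hGx x)]
    by_cases hx : x = 0
    · simp [hx, hu0, Real.zero_rpow hp0]
    · rw [mul_left_comm]
      gcongr
      exact hlow x hx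
  -- step 2
  have s2 : ∫⁻ x, ∫⁻ y, ENNReal.ofReal (|u x| ^ p) * G x y ≤
      ENNReal.ofReal (2 ^ p) * (∫⁻ x, ∫⁻ y, ENNReal.ofReal (|u y| ^ p) * G x y) +
      ENNReal.ofReal (2 ^ p) * (∫⁻ x, ∫⁻ y, ENNReal.ofReal (|u x - u y| ^ p) * G x y) := by
    rw [← mul_add, ← lintegral_add_left, ← lintegral_const_mul' _ _ ENNReal.ofReal_ne_top]
    · apply lintegral_mono
      intro x
      dsimp only
      rw [← lintegral_add_left (by fun_prop), ← lintegral_const_mul' _ _ ENNReal.ofReal_ne_top]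
      apply lintegral_mono
      intro y
      dsimp only
      rw [← add_mul, ← mul_assoc]
      gcongr
      rw [← ENNReal.ofReal_add (by positivity) (by positivity),
        ← ENNReal.ofReal_mul (by positivity)]
      exact ENNReal.ofReal_le_ofReal (fh_abs_rpow_le p hp _ _)
    · apply Measurable.lintegral_prod_right'
        (f := fun q : EuclideanSpace ℝ (Fin n) × EuclideanSpace ℝ (Fin n) =>
          ENNReal.ofReal (|u q.2| ^ p) * G q.1 q.2)
      exact Measurable.mul (by fun_prop) hGm
  -- step 3
  have s3 : ∫⁻ x, ∫⁻ y, ENNReal.ofReal (|u y| ^ p) * G x y ≤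
      ENNReal.ofReal (c * (2 ^ (s + n) * R ^ s)) * F := by
    rw [lintegral_lintegral_swap]
    · rw [hF, ← lintegral_const_mul' _ _ ENNReal.ofReal_ne_top]
      apply lintegral_mono
      intro y
      dsimp only
      rw [lintegral_const_mul _ (hGy y)]
      by_cases hy : y = 0
      · simp [hy, hu0, Real.zero_rpow hp0]
      · rw [mul_left_comm]
        gcongr
        exact hup y hy
    · have : Measurable (fun q : EuclideanSpace ℝ (Fin n) × EuclideanSpace ℝ (Fin n) =>
          ENNReal.ofReal (|u q.2| ^ p) * G q.1 q.2) := Measurable.mul (by fun_prop) hGm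
      exact this.aemeasurable
  -- step 4
  have s4 : ∫⁻ x, ∫⁻ y, ENNReal.ofReal (|u x - u y| ^ p) * G x y ≤
      ENNReal.ofReal ((1 + 2 * R) ^ (s + n) * c) * J := by
    rw [hJ, ← lintegral_const_mul' _ _ ENNReal.ofReal_ne_top]
    apply lintegral_mono
    intro x
    dsimp only
    rw [← lintegral_const_mul' _ _ ENNReal.ofReal_ne_top]
    apply lintegral_mono
    intro y
    dsimp only
    rw [div_eq_mul_inv, mul_left_comm]
    gcongr
    exact hker x y
  -- absorb
  have hmain : ENNReal.ofReal (c * R ^ (n:ℝ) / 2) * F + ENNReal.ofReal (c * R ^ (n:ℝ) / 2) * F ≤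
      ENNReal.ofReal (c * R ^ (n:ℝ) / 2) * F +
      ENNReal.ofReal (2 ^ p * ((1 + 2 * R) ^ (s + n) * c)) * J := by
    calc _ = ENNReal.ofReal (c * R ^ (n:ℝ)) * F := by
          rw [← add_mul, ← ENNReal.ofReal_add (by positivity) (by positivity), add_halves]
      _ ≤ _ := s1.trans s2
      _ ≤ _ := by
          apply add_le_add
          · refine (mul_le_mul_right s3 _).trans ?_
            rw [← mul_assoc, ← ENNReal.ofReal_mul (by positivity)]
            gcongr
            nlinarith
          · refine (mul_le_mul_right s4 _).trans (le_of_eq ?_)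
            rw [← mul_assoc, ← ENNReal.ofReal_mul (by positivity)]
  have hfin2 : ENNReal.ofReal (c * R ^ (n:ℝ) / 2) * F ≠ ⊤ :=
    ENNReal.mul_ne_top ENNReal.ofReal_ne_top hfin
  have h5 := (ENNReal.add_le_add_iff_left hfin2).1 hmain
  have hpos : 0 < c * R ^ (n:ℝ) / 2 := by positivity
  calc F = ENNReal.ofReal ((c * R ^ (n:ℝ) / 2)⁻¹) * (ENNReal.ofReal (c * R ^ (n:ℝ) / 2) * F) := by
        rw [← mul_assoc, ← ENNReal.ofReal_mul (by positivity), inv_mul_cancel₀ hpos.ne']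
        simp
    _ ≤ _ := mul_le_mul_right h5 _
    _ = _ := by rw [← mul_assoc, ← ENNReal.ofReal_mul (by positivity)]

/-- The punctured unit ball `B(0,1)∖{0}` in `ℝⁿ` satisfies a `(θ,p)`-fractional Hardy
inequality with respect to Lebesgue measure whenever `θp < n`. -/
theorem fracHardy_punctured_unit_ball (n : ℕ) (hn : 1 ≤ n)
    (θ p : ℝ) (hθ₀ : 0 < θ) (hθ₁ : θ < 1) (hp : 1 < p) (hθpn : θ * p < n) :
    ∃ C : ℝ, 1 ≤ C ∧
      FracHardy (volume : Measure (EuclideanSpace ℝ (Fin n)))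
        (ball (0 : EuclideanSpace ℝ (Fin n)) 1 \ {0}) θ p C := by
  have hs : 0 < θ * p := by positivity
  obtain ⟨C₁, hC₁, h₁⟩ := fh_boundary n hn p (θ * p) hs
  obtain ⟨C₂, hC₂, h₂⟩ := fh_origin n hn p (θ * p) hp hs hθpn
  refine ⟨1 + C₂ + C₁, by linarith, ?_⟩
  rintro u ⟨K, hK⟩ hcs hsup
  have huc := hK.continuous
  have hum : Measurable u := huc.measurable
  have h0 : (0 : EuclideanSpace ℝ (Fin n)) ∉ tsupport u := fun h => (hsup h).2 rfl
  specialize h₂ u huc hcs h0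
  specialize h₁ u hsup
  generalize θ * p = s at *
  set Ω := ball (0 : EuclideanSpace ℝ (Fin n)) 1 \ {0} with hΩ
  have hΩm : MeasurableSet Ω := measurableSet_ball.diff (measurableSet_singleton 0)
  set J := ∫⁻ x, ∫⁻ y, ENNReal.ofReal (|u x - u y| ^ p) /
          (ENNReal.ofReal (dist x y ^ s) * volume (ball x (dist x y))) with hJ
  have hpt : ∀ x ∈ Ω, ENNReal.ofReal (|u x| ^ p) / ENNReal.ofReal (infDist x Ωᶜ ^ s) ≤
      ENNReal.ofReal (|u x| ^ p) * ENNReal.ofReal (‖x‖ ^ (-s)) +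
      ENNReal.ofReal C₁ * ∫⁻ y, ENNReal.ofReal (|u x - u y| ^ p) /
          (ENNReal.ofReal (dist x y ^ s) * volume (ball x (dist x y))) := by
    intro x hx
    refine le_trans ?_ (add_le_add_right (h₁ x hx) _)
    have hx1 : ‖x‖ < 1 := by simpa using hx.1
    have hx0 : 0 < ‖x‖ := by simpa using hx.2
    have hinf : min (‖x‖) (1 - ‖x‖) ≤ infDist x Ωᶜ := by
      rw [le_infDist ⟨0, by simp [hΩ]⟩]
      intro y hy
      by_cases hy0 : y = 0
      · rw [hy0, dist_zero_right]; exact min_le_left _ _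
      · have : 1 ≤ ‖y‖ := by
          by_contra h
          exact hy ⟨by simpa using h, hy0⟩
        refine (min_le_right _ _).trans ?_
        have h3 := norm_sub_norm_le y x
        rw [← dist_eq_norm, dist_comm] at h3
        linarith
    rw [div_eq_mul_inv, Real.rpow_neg hx0.le, ENNReal.ofReal_inv_of_pos (by positivity)]
    rcases le_total (‖x‖) (1 - ‖x‖) with h | h
    · rw [min_eq_left h] at hinf
      refine le_trans ?_ le_self_add
      gcongr
    · rw [min_eq_right h] at hinf
      refine le_trans ?_ le_add_self
      have : 0 ≤ 1 - ‖x‖ := by linarith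
      gcongr
  calc _ ≤ ∫⁻ x in Ω, (ENNReal.ofReal (|u x| ^ p) * ENNReal.ofReal (‖x‖ ^ (-s)) +
      ENNReal.ofReal C₁ * ∫⁻ y, ENNReal.ofReal (|u x - u y| ^ p) /
          (ENNReal.ofReal (dist x y ^ s) * volume (ball x (dist x y)))) :=
        setLIntegral_mono' hΩm hpt
    _ ≤ _ := setLIntegral_le_lintegral _ _
    _ ≤ ENNReal.ofReal C₂ * J + ENNReal.ofReal C₁ * J := by
        rw [lintegral_add_left (by fun_prop), lintegral_const_mul' _ _ ENNReal.ofReal_ne_top]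
        exact add_le_add_left h₂ _
    _ ≤ _ := by
        rw [← add_mul, ← ENNReal.ofReal_add hC₂ hC₁]
        gcongr
        linarith
end

section
/- Let n ≥ 1, 0<θ<1 and 1<p<∞ with θp < n, let Λ > 2 and r > 0. Then the fractional relative (θ,p)-capacity of the point {0} in ℝⁿ vanishes: the infimum, over all continuous functions u : ℝⁿ → ℝ with u(0) ≥ 1 and u = 0 on ℝⁿ∖B(0,2r), of ∫_{B(0,Λr)} ∫_{B(0,Λr)} |u(x)−u(y)|^p / (|x−y|^{θp} · Lⁿ(B(x,|x−y|))) dy dx equals 0, where Lⁿ is n-dimensional Lebesgue measure. -/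
open MeasureTheory Metric Set ENNReal

/-- The radial profile of the majorizing kernel. -/
noncomputable def kprof (n : ℕ) (θ p : ℝ) (t : ℝ) : ℝ :=
  (min 1 t) ^ p / (t ^ (θ * p) * t ^ n)

lemma kprof_nonneg (n : ℕ) (θ p : ℝ) {t : ℝ} (ht : 0 ≤ t) : 0 ≤ kprof n θ p t := by
  unfold kprof
  have : 0 ≤ min 1 t := le_min zero_le_one ht
  positivity

lemma kprof_measurable (n : ℕ) (θ p : ℝ) : Measurable (kprof n θ p) := by
  unfold kprof
  fun_prop

lemma kprof_integrable (n : ℕ) (hn : 1 ≤ n) (θ p : ℝ) (hθ₀ : 0 < θ) (hθ₁ : θ < 1) (hp : 1 < p) :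
    Integrable (fun z : EuclideanSpace ℝ (Fin n) => kprof n θ p ‖z‖) volume := by
  have : Nontrivial (EuclideanSpace ℝ (Fin n)) := by
    have : Nonempty (Fin n) := ⟨⟨0, hn⟩⟩
    infer_instance
  rw [integrable_fun_norm_addHaar (μ := (volume : Measure (EuclideanSpace ℝ (Fin n))))
    (f := kprof n θ p)]
  simp only [finrank_euclideanSpace, Fintype.card_fin, smul_eq_mul]
  have key : ∀ t : ℝ, 0 < t → t ^ (n - 1) * kprof n θ p t = (min 1 t) ^ p * t ^ (-(θ * p) - 1) := by
    intro t ht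
    unfold kprof
    obtain ⟨m, rfl⟩ : ∃ m, n = m + 1 := ⟨n - 1, by omega⟩
    rw [Real.rpow_sub ht, Real.rpow_neg ht.le, Real.rpow_one, Nat.add_sub_cancel]
    have : 0 < t ^ (θ * p) := Real.rpow_pos_of_pos ht _
    field_simp
    ring
  have hU : Ioi (0 : ℝ) = Ioo 0 1 ∪ Ici 1 := (Ioo_union_Ici_eq_Ioi zero_lt_one).symm
  rw [hU]
  refine IntegrableOn.union ?_ ?_
  · have h1 : IntegrableOn (fun t : ℝ => t ^ (p - θ * p - 1)) (Ioo 0 1) := by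
      rw [intervalIntegral.integrableOn_Ioo_rpow_iff zero_lt_one]
      nlinarith
    refine h1.congr_fun ?_ measurableSet_Ioo
    intro t ht
    simp only
    rw [key t ht.1, min_eq_right ht.2.le, ← Real.rpow_add ht.1]
    congr 1; ring
  · rw [integrableOn_Ici_iff_integrableOn_Ioi]
    have h1 : IntegrableOn (fun t : ℝ => t ^ (-(θ * p) - 1)) (Ioi 1) := by
      apply integrableOn_Ioi_rpow_of_lt _ zero_lt_one
      nlinarith
    refine h1.congr_fun ?_ measurableSet_Ioi
    intro t ht
    have ht' : (1 : ℝ) < t := ht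
    simp only
    rw [key t (by linarith), min_eq_left ht'.le, Real.one_rpow, one_mul]

/-- The tent function of radius `ε`. -/
noncomputable def tent (n : ℕ) (ε : ℝ) (x : EuclideanSpace ℝ (Fin n)) : ℝ := max 0 (1 - ‖x‖ / ε)

lemma tent_diff (n : ℕ) {ε : ℝ} (hε : 0 < ε) (x y : EuclideanSpace ℝ (Fin n)) :
    |tent n ε x - tent n ε y| ≤ min 1 (dist x y / ε) := by
  have hx : 0 ≤ ‖x‖ / ε := by positivity
  have hy : 0 ≤ ‖y‖ / ε := by positivity
  have h1 : |‖x‖ / ε - ‖y‖ / ε| ≤ dist x y / ε := by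
    rw [← sub_div, abs_div, abs_of_pos hε, dist_eq_norm]
    gcongr
    exact abs_norm_sub_norm_le x y
  have h2 := abs_le.1 h1
  unfold tent
  apply le_min
  · rw [abs_le]
    constructor <;> rcases max_cases 0 (1 - ‖x‖ / ε) with h | h <;>
      rcases max_cases 0 (1 - ‖y‖ / ε) with h' | h' <;> linarith
  · rw [abs_le]
    constructor <;> rcases max_cases 0 (1 - ‖x‖ / ε) with h | h <;>
      rcases max_cases 0 (1 - ‖y‖ / ε) with h' | h' <;> linarith

lemma tent_zero (n : ℕ) {ε : ℝ} (hε : 0 < ε) {x : EuclideanSpace ℝ (Fin n)}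
    (hx : x ∉ ball (0 : EuclideanSpace ℝ (Fin n)) ε) : tent n ε x = 0 := by
  have : ε ≤ ‖x‖ := by simpa using hx
  unfold tent
  apply max_eq_left
  rw [sub_nonpos, le_div_iff₀ hε]
  linarith

/-- The majorizing kernel. -/
noncomputable def gker (n : ℕ) (θ p ε : ℝ) (z : EuclideanSpace ℝ (Fin n)) : ℝ≥0∞ :=
  ENNReal.ofReal (ε ^ (-(θ * p)) * (ε ^ n)⁻¹ * kprof n θ p ‖ε⁻¹ • z‖) *
    (volume (ball (0 : EuclideanSpace ℝ (Fin n)) 1))⁻¹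

lemma gker_measurable (n : ℕ) (θ p ε : ℝ) : Measurable (gker n θ p ε) := by
  have := kprof_measurable n θ p
  unfold gker
  fun_prop

lemma gker_neg (n : ℕ) (θ p ε : ℝ) (z : EuclideanSpace ℝ (Fin n)) :
    gker n θ p ε (-z) = gker n θ p ε z := by
  unfold gker; simp

lemma lintegral_gker (n : ℕ) (hn : 1 ≤ n) (θ p : ℝ) (hθ₀ : 0 < θ) (hθ₁ : θ < 1) (hp : 1 < p)
    {ε : ℝ} (hε : 0 < ε) :
    ∫⁻ z, gker n θ p ε z = ENNReal.ofReal (ε ^ (-(θ * p)) *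
      ∫ z : EuclideanSpace ℝ (Fin n), kprof n θ p ‖z‖) *
        (volume (ball (0 : EuclideanSpace ℝ (Fin n)) 1))⁻¹ := by
  unfold gker
  have hm := kprof_measurable n θ p
  have hi := kprof_integrable n hn θ p hθ₀ hθ₁ hp
  rw [lintegral_mul_const _ (by fun_prop)]
  congr 1
  rw [← ofReal_integral_eq_lintegral_ofReal]
  · rw [integral_const_mul]
    rw [Measure.integral_comp_smul volume
      (fun z : EuclideanSpace ℝ (Fin n) => kprof n θ p ‖z‖) ε⁻¹]
    congr 1
    simp only [finrank_euclideanSpace, Fintype.card_fin, smul_eq_mul, inv_pow, inv_inv]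
    rw [abs_of_pos (by positivity)]
    field_simp
  · exact (hi.comp_smul (inv_ne_zero hε.ne')).const_mul _
  · refine Filter.Eventually.of_forall fun z => ?_
    have := kprof_nonneg n θ p (norm_nonneg (ε⁻¹ • z))
    simp only [Pi.zero_apply]
    positivity

lemma integrand_le (n : ℕ) (θ p : ℝ) (hp : 1 < p)
    {ε : ℝ} (hε : 0 < ε) (x y : EuclideanSpace ℝ (Fin n)) :
    ENNReal.ofReal (|tent n ε x - tent n ε y| ^ p) /
        (ENNReal.ofReal (dist x y ^ (θ * p)) * volume (ball x (dist x y))) ≤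
      gker n θ p ε (x - y) := by
  rcases eq_or_ne x y with rfl | hxy
  · simp [Real.zero_rpow (by linarith : p ≠ 0)]
  have hd : 0 < dist x y := dist_pos.2 hxy
  have hdp : 0 < dist x y ^ (θ * p) := Real.rpow_pos_of_pos hd _
  rw [Measure.addHaar_ball_of_pos _ _ hd, ← mul_assoc, ← ENNReal.ofReal_mul hdp.le]
  unfold gker
  simp only [finrank_euclideanSpace, Fintype.card_fin]
  have hV0 : volume (ball (0 : EuclideanSpace ℝ (Fin n)) 1) ≠ 0 :=
    (measure_ball_pos _ _ one_pos).ne'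
  rw [div_eq_mul_inv, ENNReal.mul_inv (Or.inr measure_ball_lt_top.ne) (Or.inr hV0), ← mul_assoc,
    ← div_eq_mul_inv (ENNReal.ofReal _) (ENNReal.ofReal _), ← ENNReal.ofReal_div_of_pos (by positivity)]
  gcongr
  have hmin := tent_diff n hε x y
  have e : ‖ε⁻¹ • (x - y)‖ = dist x y / ε := by
    rw [norm_smul, norm_inv, Real.norm_of_nonneg hε.le, dist_eq_norm]; ring
  rw [e]
  unfold kprof
  rw [Real.div_rpow hd.le hε.le, Real.rpow_neg hε.le, div_pow]
  have hεp : 0 < ε ^ (θ * p) := Real.rpow_pos_of_pos hε _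
  have : (ε ^ (θ * p))⁻¹ * (ε ^ n)⁻¹ * ((min 1 (dist x y / ε)) ^ p /
      (dist x y ^ (θ * p) / ε ^ (θ * p) * (dist x y ^ n / ε ^ n))) =
      (min 1 (dist x y / ε)) ^ p / (dist x y ^ (θ * p) * dist x y ^ n) := by
    generalize (min 1 (dist x y / ε)) ^ p = A
    field_simp
  rw [this]
  gcongr

lemma energy_le (n : ℕ) (θ p : ℝ) (hp : 1 < p)
    {ε : ℝ} (hε : 0 < ε) (B : Set (EuclideanSpace ℝ (Fin n))) :
    ∫⁻ x in B, ∫⁻ y in B, ENNReal.ofReal (|tent n ε x - tent n ε y| ^ p) /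
        (ENNReal.ofReal (dist x y ^ (θ * p)) * volume (ball x (dist x y))) ≤
      2 * (volume (ball (0 : EuclideanSpace ℝ (Fin n)) ε) * ∫⁻ z, gker n θ p ε z) := by
  set S := ball (0 : EuclideanSpace ℝ (Fin n)) ε with hS
  have hSm : MeasurableSet S := measurableSet_ball
  have hg := gker_measurable n θ p ε
  set f1 : EuclideanSpace ℝ (Fin n) → EuclideanSpace ℝ (Fin n) → ℝ≥0∞ :=
    fun x y => S.indicator 1 x * gker n θ p ε (x - y) with hf1
  set f2 : EuclideanSpace ℝ (Fin n) → EuclideanSpace ℝ (Fin n) → ℝ≥0∞ :=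
    fun x y => S.indicator 1 y * gker n θ p ε (x - y) with hf2
  have hind : Measurable (S.indicator (1 : EuclideanSpace ℝ (Fin n) → ℝ≥0∞)) :=
    measurable_one.indicator hSm
  have m1 : Measurable (Function.uncurry f1) := by
    simp only [hf1, Function.uncurry_def]
    fun_prop
  have m2 : Measurable (Function.uncurry f2) := by
    simp only [hf2, Function.uncurry_def]
    fun_prop
  have hb : ∀ x y, ENNReal.ofReal (|tent n ε x - tent n ε y| ^ p) /
        (ENNReal.ofReal (dist x y ^ (θ * p)) * volume (ball x (dist x y))) ≤ f1 x y + f2 x y := by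
    intro x y
    by_cases hx : x ∈ S
    · refine (integrand_le n θ p hp hε x y).trans ?_
      simp [hf1, hx]
    by_cases hy : y ∈ S
    · refine (integrand_le n θ p hp hε x y).trans ?_
      simp [hf2, hy]
    · rw [tent_zero n hε hx, tent_zero n hε hy]
      simp [Real.zero_rpow (by linarith : p ≠ 0)]
  have i1 : ∫⁻ x, ∫⁻ y, f1 x y = volume S * ∫⁻ z, gker n θ p ε z := by
    have : ∀ x, ∫⁻ y, f1 x y = S.indicator 1 x * ∫⁻ z, gker n θ p ε z := by
      intro x
      simp only [hf1]
      rw [lintegral_const_mul _ (by fun_prop)]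
      rw [lintegral_sub_left_eq_self (gker n θ p ε) x]
    simp_rw [this]
    rw [lintegral_mul_const _ hind, lintegral_indicator_one hSm]
  have i2 : ∫⁻ x, ∫⁻ y, f2 x y = volume S * ∫⁻ z, gker n θ p ε z := by
    rw [lintegral_lintegral_swap m2.aemeasurable, ← i1]
    refine lintegral_congr fun y => lintegral_congr fun x => ?_
    simp only [hf1, hf2]
    rw [← gker_neg, neg_sub]
  calc _ ≤ ∫⁻ x, ∫⁻ y, (f1 x y + f2 x y) := by
        refine (setLIntegral_le_lintegral _ _).trans ?_
        refine lintegral_mono fun x => ?_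
        refine (setLIntegral_le_lintegral _ _).trans ?_
        exact lintegral_mono fun y => hb x y
    _ = ∫⁻ x, ((∫⁻ y, f1 x y) + ∫⁻ y, f2 x y) := by
        refine lintegral_congr fun x => ?_
        exact lintegral_add_left (m1.comp measurable_prodMk_left) _
    _ = (∫⁻ x, ∫⁻ y, f1 x y) + ∫⁻ x, ∫⁻ y, f2 x y :=
        lintegral_add_left (Measurable.lintegral_prod_right m1) _
    _ = _ := by rw [i1, i2, two_mul]

/-- The fractional relative `(θ,p)`-capacity of the point `{0}` in `ℝⁿ` vanishes when
`θp < n`: the infimum over all continuous `u : ℝⁿ → ℝ` with `u(0) ≥ 1` and `u = 0`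
outside `B(0,2r)` of the Besov energy over `B(0,Λr) × B(0,Λr)` equals `0`. -/
theorem frac_capacity_of_point_eq_zero (n : ℕ) (hn : 1 ≤ n)
    (θ p : ℝ) (hθ₀ : 0 < θ) (hθ₁ : θ < 1) (hp : 1 < p) (hθpn : θ * p < n)
    (Λ r : ℝ) (hΛ : 2 < Λ) (hr : 0 < r) :
    ⨅ u : {u : EuclideanSpace ℝ (Fin n) → ℝ // Continuous u ∧ 1 ≤ u 0 ∧
        ∀ x ∉ ball (0 : EuclideanSpace ℝ (Fin n)) (2 * r), u x = 0},
      ∫⁻ x in ball (0 : EuclideanSpace ℝ (Fin n)) (Λ * r),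
        ∫⁻ y in ball (0 : EuclideanSpace ℝ (Fin n)) (Λ * r),
          ENNReal.ofReal (|u.1 x - u.1 y| ^ p) /
            (ENNReal.ofReal (dist x y ^ (θ * p)) * volume (ball x (dist x y)))
          ∂volume ∂volume = 0 := by
  set I := ∫ z : EuclideanSpace ℝ (Fin n), kprof n θ p ‖z‖ with hI
  have hbound : ∀ ε : ℝ, 0 < ε → ε ≤ 2 * r → (⨅ u : {u : EuclideanSpace ℝ (Fin n) → ℝ //
        Continuous u ∧ 1 ≤ u 0 ∧
        ∀ x ∉ ball (0 : EuclideanSpace ℝ (Fin n)) (2 * r), u x = 0},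
      ∫⁻ x in ball (0 : EuclideanSpace ℝ (Fin n)) (Λ * r),
        ∫⁻ y in ball (0 : EuclideanSpace ℝ (Fin n)) (Λ * r),
          ENNReal.ofReal (|u.1 x - u.1 y| ^ p) /
            (ENNReal.ofReal (dist x y ^ (θ * p)) * volume (ball x (dist x y)))
          ∂volume ∂volume) ≤ ENNReal.ofReal (2 * (ε ^ ((n : ℝ) - θ * p) * I)) := by
    intro ε hε hεr
    have hc : Continuous (tent n ε) := by unfold tent; fun_prop
    refine (iInf_le _ ⟨tent n ε, hc, by simp [tent], fun x hx => tent_zero n hε fun h =>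
      hx (ball_subset_ball hεr h)⟩).trans ?_
    refine (energy_le n θ p hp hε _).trans (le_of_eq ?_)
    rw [lintegral_gker n hn θ p hθ₀ hθ₁ hp hε, Measure.addHaar_ball_of_pos _ _ hε]
    simp only [finrank_euclideanSpace, Fintype.card_fin]
    have hV0 : volume (ball (0 : EuclideanSpace ℝ (Fin n)) 1) ≠ 0 :=
      (measure_ball_pos _ _ one_pos).ne'
    have hV1 : volume (ball (0 : EuclideanSpace ℝ (Fin n)) 1) ≠ ⊤ := measure_ball_lt_top.ne
    have hpow : ε ^ ((n : ℝ) - θ * p) * I = ε ^ n * (ε ^ (-(θ * p)) * I) := by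
      rw [sub_eq_add_neg, Real.rpow_add hε, Real.rpow_natCast]; ring
    rw [hpow, ENNReal.ofReal_mul (show (0 : ℝ) ≤ 2 by norm_num),
      ENNReal.ofReal_mul (show 0 ≤ ε ^ n by positivity)]
    rw [ENNReal.ofReal_ofNat]
    congr 1
    rw [mul_assoc, mul_left_comm (volume _), ENNReal.mul_inv_cancel hV0 hV1, mul_one]
  have hcont : Filter.Tendsto (fun ε : ℝ => ENNReal.ofReal (2 * (ε ^ ((n : ℝ) - θ * p) * I)))
      (nhdsWithin 0 (Ioi 0)) (nhds 0) := by
    have hs : 0 < (n : ℝ) - θ * p := by linarith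
    have h1 : Continuous fun ε : ℝ => ENNReal.ofReal (2 * (ε ^ ((n : ℝ) - θ * p) * I)) := by
      have := Real.continuous_rpow_const hs.le
      exact ENNReal.continuous_ofReal.comp (by fun_prop)
    have h2 := h1.tendsto 0
    simp only [Real.zero_rpow hs.ne', zero_mul, mul_zero, ENNReal.ofReal_zero] at h2
    exact h2.mono_left nhdsWithin_le_nhds
  refine le_antisymm (ge_of_tendsto hcont ?_) zero_le
  filter_upwards [Ioc_mem_nhdsGT (show (0 : ℝ) < 2 * r by positivity)] with ε hε
  exact hbound ε hε.1 hε.2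
end

section
/- Let (Z,d,ν) be a metric measure space with ν a doubling measure with constant C_ν, and let Z₀ ⊂ Z be a compact set satisfying the following corkscrew condition with constant 0<c≤1: for every z ∈ Z₀ and every 0 < R < diam(Z₀) there exists z' ∈ B(z,R) with B(z',cR) ⊂ B(z,R) ∩ Z₀. Let F ⊂ Z₀ be a closed set, let t ≥ 0, and suppose there is a constant C ≥ 1 such that ν(B(z,R) ∩ F_r) ≤ C (r/R)^t ν(B(z,R)) for all z ∈ F and 0 < r ≤ R < diam(Z). Then there exists a constant C' ≥ 1, depending only on C, c and C_ν, such that ν(B(z,R) ∩ F_r ∩ Z₀) ≤ C' (r/R)^t ν(B(z,R) ∩ Z₀) for all z ∈ F and 0 < r ≤ R < diam(Z₀). -/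
open MeasureTheory Metric Set ENNReal

theorem doubling_iterate {Z : Type*} [PseudoMetricSpace Z] [MeasurableSpace Z]
    {ν : Measure Z} {Cν : ℝ} (h : IsDoublingWith ν Cν) (x : Z) (n : ℕ) (r : ℝ) (hr : 0 < r) :
    ν (ball x (2 ^ n * r)) ≤ ENNReal.ofReal Cν ^ n * ν (ball x r) := by
  induction n with
  | zero => simp
  | succ k ih =>
    have h1 := (h x (2 ^ k * r) (by positivity)).2.1
    calc ν (ball x (2 ^ (k + 1) * r)) = ν (ball x (2 * (2 ^ k * r))) := by
          congr 2; ring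
      _ ≤ _ := h1
      _ ≤ ENNReal.ofReal Cν * (ENNReal.ofReal Cν ^ k * ν (ball x r)) := by gcongr
      _ = _ := by rw [pow_succ]; ring

/-- Restriction of a lower Assouad codimension-type estimate to a compact corkscrew
subset: if `Z₀` is compact satisfying a corkscrew condition with constant `c`, `F ⊆ Z₀`
is closed, `t ≥ 0`, and `ν(B(z,R) ∩ F_r) ≤ C (r/R)^t ν(B(z,R))` for all `z ∈ F` and
`0 < r ≤ R < diam Z`, then there is `C' ≥ 1`, depending only on `C`, `c` and `Cν`, with
`ν(B(z,R) ∩ F_r ∩ Z₀) ≤ C' (r/R)^t ν(B(z,R) ∩ Z₀)` for all `z ∈ F` and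
`0 < r ≤ R < diam Z₀`. -/
theorem restricted_codimension_estimate :
    ∃ C' : ℝ → ℝ → ℝ → ℝ,
      ∀ C c Cν : ℝ, 1 ≤ C → 0 < c → c ≤ 1 → 1 ≤ Cν →
        1 ≤ C' C c Cν ∧
        ∀ (Z : Type) [MetricSpace Z] [MeasurableSpace Z] (ν : Measure Z),
          IsDoublingWith ν Cν →
          ∀ Z₀ : Set Z, IsCompact Z₀ →
            (∀ z ∈ Z₀, ∀ R : ℝ, 0 < R → ENNReal.ofReal R < EMetric.diam Z₀ →
              ∃ z' ∈ ball z R, ball z' (c * R) ⊆ ball z R ∩ Z₀) →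
          ∀ F : Set Z, IsClosed F → F ⊆ Z₀ →
          ∀ t : ℝ, 0 ≤ t →
            (∀ z ∈ F, ∀ r R : ℝ, 0 < r → r ≤ R →
              ENNReal.ofReal R < EMetric.diam (Set.univ : Set Z) →
              ν (ball z R ∩ Metric.thickening r F) ≤
                ENNReal.ofReal (C * (r / R) ^ t) * ν (ball z R)) →
            ∀ z ∈ F, ∀ r R : ℝ, 0 < r → r ≤ R →
              ENNReal.ofReal R < EMetric.diam Z₀ →
              ν (ball z R ∩ Metric.thickening r F ∩ Z₀) ≤
                ENNReal.ofReal (C' C c Cν * (r / R) ^ t) * ν (ball z R ∩ Z₀) := by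
  refine ⟨fun C c Cν => C * Cν ^ ⌈2 / c⌉₊, ?_⟩
  intro C c Cν hC hc hc1 hCν
  refine ⟨one_le_mul_of_one_le_of_one_le hC (one_le_pow₀ hCν), ?_⟩
  intro Z _ _ ν hν Z₀ _ hcork F _ hFZ t ht hF z hz r R hr hrR hR
  have hR0 : 0 < R := hr.trans_le hrR
  obtain ⟨z', hz', hsub⟩ := hcork z (hFZ hz) R hR0 hR
  have hn : 2 ≤ 2 ^ ⌈2 / c⌉₊ * c := by
    have h1 : 2 / c ≤ (⌈2 / c⌉₊ : ℝ) := Nat.le_ceil _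
    have h2 : ((⌈2 / c⌉₊ : ℕ) : ℝ) ≤ 2 ^ ⌈2 / c⌉₊ := by
      exact_mod_cast (Nat.lt_two_pow_self (n := ⌈2 / c⌉₊)).le
    exact (div_le_iff₀ hc).1 (h1.trans h2)
  have hball : ball z R ⊆ ball z' (2 ^ ⌈2 / c⌉₊ * (c * R)) := by
    apply ball_subset_ball'
    have h3 : dist z z' < R := by rw [dist_comm]; exact hz'
    nlinarith
  have hkey : ν (ball z R) ≤ ENNReal.ofReal Cν ^ ⌈2 / c⌉₊ * ν (ball z R ∩ Z₀) :=
    calc ν (ball z R) ≤ _ := measure_mono hball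
      _ ≤ _ := doubling_iterate hν z' _ _ (by positivity)
      _ ≤ _ := by gcongr
  have hpos : 0 ≤ (r / R) ^ t := Real.rpow_nonneg (by positivity) t
  calc ν (ball z R ∩ Metric.thickening r F ∩ Z₀)
      ≤ ν (ball z R ∩ Metric.thickening r F) := measure_mono inter_subset_left
    _ ≤ _ := hF z hz r R hr hrR (hR.trans_le (EMetric.diam_mono (subset_univ _)))
    _ ≤ ENNReal.ofReal (C * (r / R) ^ t) *
        (ENNReal.ofReal Cν ^ ⌈2 / c⌉₊ * ν (ball z R ∩ Z₀)) := by gcongr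
    _ = _ := by
      rw [← ENNReal.ofReal_pow (by linarith), ← mul_assoc, ← ENNReal.ofReal_mul (by positivity)]
      congr 2
      ring
end
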